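/- arXiv:1502.06795 — 3 statements merged into one kernel-verified Lean document; each statement's English description precedes it below -/
import Mathlib

section
/- Let X and Y be complex Banach spaces, let O ⊆ X be an open set, and let u : O → Y be holomorphic on O (i.e., u has a complex Fréchet derivative at each point of O) and uniformly bounded: sup_{x∈O} ‖u(x)‖_Y ≤ B for some finite B. Let K ⊆ O be a compact subset of X. Then for every s > 1 and every t < s − 1, if sup_{n≥1} n^s d_n(K)_X < ∞ then sup_{n≥1} n^t d_n(u(K))_Y < ∞, where u(K) := {u(x) : x ∈ K}. -/
/-- The Kolmogorov `n`-width of a subset `K` of a complex normed space `X`: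
the infimum over all `n`-dimensional subspaces `W` of `X` of the deviation
`sup_{v ∈ K} inf_{w ∈ W} ‖v - w‖`. -/
noncomputable def kolWidth {X : Type*} [NormedAddCommGroup X] [NormedSpace ℂ X]
    (n : ℕ) (K : Set X) : ℝ :=
  ⨅ W : {W : Submodule ℂ X // Module.finrank ℂ ↥W = n},
    ⨆ x : K, ⨅ w : ↥W.1, ‖(x : X) - (w : X)‖

/-!
A holomorphic map is locally the sum of a power series `∑ pₘ (x - x₀)ᵐ` with `‖pₘ‖ ≤ M aᵐ`. Near
`x₀`, write `x - x₀` as a telescoping sum of increments `v k` of size about `2 ^ (-s k)`, each lying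
in a subspace of dimension about `2 ^ k`. Multilinearity expands `pₘ (∑ k, v k)ᵐ` over words
`(k₁, …, kₘ)`: a word of weight `k₁ + ⋯ + kₘ = w` spans a space of dimension about `2 ^ w` and
contributes about `2 ^ (-s w)`. Keeping the words of weight less than `L` therefore gives dimension
about `2 ^ L` and error about `2 ^ (-s L)`. The number of words and the constants are paid for by
an arbitrarily small loss in the rate, a factor `α ^ k` with `α < 1` close to `1`; starting the
telescoping at a large `k₀`, that is, staying close to `x₀`, makes `∑ α ^ k` small. Compactness
makes finitely many such neighbourhoods suffice, so every `t < s` is reached.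
-/

open Metric Set Filter Topology
open scoped NNReal

section Holomorphic

lemma exists_ball_two_mul_subset_norm_le {E F : Type*} [PseudoMetricSpace E]
    [SeminormedAddCommGroup F] {f : E → F} {x : E} {O : Set E} (hO : IsOpen O)
    (hf : ContinuousOn f O) (hx : x ∈ O) :
    ∃ R > 0, ∃ M : ℝ, ball x (2 * R) ⊆ O ∧ ∀ z ∈ ball x (2 * R), ‖f z‖ ≤ M := by
  have hbdd : ∀ᶠ z in 𝓝 x, ‖f z‖ < ‖f x‖ + 1 :=
    (hf.continuousAt (hO.mem_nhds hx)).norm.eventually_lt_const (lt_add_one _)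
  obtain ⟨R, hR, h⟩ := Metric.eventually_nhds_iff_ball.1 (hbdd.and (hO.mem_nhds hx))
  refine ⟨R / 2, half_pos hR, ‖f x‖ + 1, ?_⟩
  rw [mul_div_cancel₀ R two_ne_zero]
  exact ⟨fun z hz => (h z hz).2, fun z hz => (h z hz).1.le⟩

lemma eventually_norm_smul_lt {𝕜 E : Type*} [NormedField 𝕜] [SeminormedAddCommGroup E]
    [NormedSpace 𝕜 E] {R : ℝ} (hR : 0 < R) (v : E) : ∀ᶠ c : 𝕜 in 𝓝[≠] 0, ‖c • v‖ < R := by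
  have hlim : Tendsto (fun c : 𝕜 => ‖c • v‖) (𝓝 0) (𝓝 0) := by
    simpa using (by fun_prop : Continuous fun c : 𝕜 => ‖c • v‖).tendsto 0
  exact (hlim.mono_left nhdsWithin_le_nhds).eventually_lt_const hR

variable {E F : Type*} [NormedAddCommGroup E] [NormedSpace ℂ E]
  [NormedAddCommGroup F] [NormedSpace ℂ F] {f : E → F} {x : E} {R M : ℝ}

lemma norm_fderiv_le_of_norm_le_on_ball (hR : 0 < R) (hf : DifferentiableOn ℂ f (ball x R))
    (hM : ∀ z ∈ ball x R, ‖f z‖ ≤ M) : ‖fderiv ℂ f x‖ ≤ 2 * M / R := by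
  refine Complex.norm_fderiv_le_div_of_mapsTo_ball hf (fun z hz => ?_) hR
  rw [mem_closedBall, dist_eq_norm, two_mul]
  exact norm_sub_le_of_le (hM z hz) (hM x (mem_ball_self hR))

lemma norm_sub_sub_fderiv_le_of_norm_le_on_ball (hf : DifferentiableOn ℂ f (ball x R))
    (hM : ∀ z ∈ ball x R, ‖f z‖ ≤ M) {h : E} (hh : ‖h‖ < R) :
    ‖f (x + h) - f x - fderiv ℂ f x h‖ ≤ 4 * M * (‖h‖ / R) ^ 2 := by
  have hR : 0 < R := (norm_nonneg h).trans_lt hh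
  set r : E → F := fun z => f z - f x - fderiv ℂ f x (z - x)
  have hrx : r x = 0 := by simp [r]
  have hr_diff : DifferentiableOn ℂ r (ball x R) :=
    (hf.sub_const _).sub (by fun_prop)
  have hr_maps : MapsTo r (ball x R) (closedBall (r x) (4 * M)) := by
    intro z hz
    have hderiv : ‖fderiv ℂ f x (z - x)‖ ≤ 2 * M := by
      calc ‖fderiv ℂ f x (z - x)‖ ≤ 2 * M / R * R :=
            (fderiv ℂ f x).le_of_opNorm_le_of_le (norm_fderiv_le_of_norm_le_on_ball hR hf hM)
              (mem_ball_iff_norm.1 hz).le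
        _ = 2 * M := by field_simp
    rw [hrx, mem_closedBall_zero_iff]
    linarith [norm_sub_le_of_le (norm_sub_le_of_le (hM z hz) (hM x (mem_ball_self hR))) hderiv]
  have hr_little : (r · - r x) =o[𝓝 x] (fun z => ‖z - x‖ ^ 1) := by
    simpa only [hrx, sub_zero, pow_one] using
      (hf.differentiableAt (ball_mem_nhds x hR)).hasFDerivAt.isLittleO.norm_right
  simpa [r] using Complex.dist_le_mul_div_pow_of_mapsTo_ball_of_isLittleO hr_diff hr_maps
    hr_little (z := x + h) (by simpa using hh)

lemma uniformCauchySeqOn_fderiv {ι : Type*} {l : Filter ι} {φ : ι → E → F} (hR : 0 < R)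
    (hφ : ∀ᶠ i in l, DifferentiableOn ℂ (φ i) (ball x (2 * R)))
    (hcauchy : UniformCauchySeqOn φ l (ball x (2 * R))) :
    UniformCauchySeqOn (fun i => fderiv ℂ (φ i)) l (ball x R) := by
  intro s hs
  obtain ⟨ε, hε, hεs⟩ := Metric.mem_uniformity_dist.1 hs
  filter_upwards [hcauchy _ (Metric.dist_mem_uniformity (show 0 < ε * R / 4 by positivity)),
    hφ.prod_mk hφ] with ⟨i, j⟩ hij ⟨hi, hj⟩ y hy
  have hsub : ball y R ⊆ ball x (2 * R) :=
    ball_subset_ball' (by linarith [mem_ball.1 hy])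
  have hy_nhds : ball x (2 * R) ∈ 𝓝 y := mem_of_superset (ball_mem_nhds y hR) hsub
  refine hεs ?_
  rw [dist_eq_norm, ← fderiv_sub (hi.differentiableAt hy_nhds) (hj.differentiableAt hy_nhds)]
  calc ‖fderiv ℂ (φ i - φ j) y‖ ≤ 2 * (ε * R / 4) / R :=
        norm_fderiv_le_of_norm_le_on_ball hR ((hi.sub hj).mono hsub)
          fun z hz => (dist_eq_norm (φ i z) (φ j z) ▸ hij z (hsub hz)).le
    _ = ε / 2 := by field_simp; norm_num
    _ < ε := half_lt_self hε

lemma differentiableAt_of_tendstoUniformlyOn_ball [CompleteSpace F] {ι : Type*} {l : Filter ι}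
    [l.NeBot] {φ : ι → E → F} {g : E → F} (hR : 0 < R)
    (hφ : ∀ᶠ i in l, DifferentiableOn ℂ (φ i) (ball x R))
    (hlim : TendstoUniformlyOn φ g l (ball x R)) : DifferentiableAt ℂ g x := by
  obtain ⟨r, rfl⟩ : ∃ r, R = 2 * r := ⟨R / 2, by ring⟩
  have hr : 0 < r := by linarith
  have hcauchy := uniformCauchySeqOn_fderiv hr hφ hlim.uniformCauchySeqOn
  choose! g' hg' using fun y hy => CompleteSpace.complete (hcauchy.cauchy_map (x := y) hy)
  have hlim' := hcauchy.tendstoUniformlyOn_of_tendsto hg'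
  refine (hasFDerivAt_of_tendstoUniformlyOnFilter (g' := g') (l := l) (f := φ)
    (hlim'.tendstoUniformlyOnFilter.mono_right (le_principal_iff.2 (ball_mem_nhds x hr)))
    ?_ ?_).differentiableAt
  · filter_upwards [hφ.prod_mk (ball_mem_nhds x hR)] with ⟨i, y⟩ ⟨hi, hy⟩
    exact (hi.differentiableAt (isOpen_ball.mem_nhds hy)).hasFDerivAt
  · filter_upwards [ball_mem_nhds x hR] with y hy using hlim.tendsto_at hy

lemma tendstoUniformlyOn_differenceQuotient (hR : 0 < R)
    (hf : DifferentiableOn ℂ f (ball x (2 * R))) (hM : ∀ z ∈ ball x (2 * R), ‖f z‖ ≤ M) (v : E) :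
    TendstoUniformlyOn (fun (c : ℂ) y => c⁻¹ • (f (y + c • v) - f y))
      (fun y => fderiv ℂ f y v) (𝓝[≠] 0) (ball x R) := by
  have herr : Tendsto (fun c : ℂ => 4 * M * (‖v‖ / R) ^ 2 * ‖c‖) (𝓝[≠] 0) (𝓝 0) := by
    simpa using (tendsto_norm_zero.mono_left nhdsWithin_le_nhds).const_mul
      (4 * M * (‖v‖ / R) ^ 2)
  rw [Metric.tendstoUniformlyOn_iff]
  intro ε hε
  filter_upwards [eventually_norm_smul_lt hR v, herr.eventually_lt_const hε,
    self_mem_nhdsWithin] with c hc hcε hc0 y hy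
  have hsub : ball y R ⊆ ball x (2 * R) := ball_subset_ball' (by linarith [mem_ball.1 hy])
  have hquad := norm_sub_sub_fderiv_le_of_norm_le_on_ball (hf.mono hsub)
    (fun z hz => hM z (hsub hz)) hc
  have heq : c⁻¹ • (f (y + c • v) - f y) - fderiv ℂ f y v =
      c⁻¹ • (f (y + c • v) - f y - fderiv ℂ f y (c • v)) := by
    rw [map_smul, smul_sub _ _ (c • _), inv_smul_smul₀ hc0]
  have hc_pos : 0 < ‖c‖ := norm_pos_iff.2 hc0
  rw [dist_comm, dist_eq_norm, heq, norm_smul, norm_inv]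
  calc ‖c‖⁻¹ * ‖f (y + c • v) - f y - fderiv ℂ f y (c • v)‖
      ≤ ‖c‖⁻¹ * (4 * M * (‖c • v‖ / R) ^ 2) := by gcongr
    _ = 4 * M * (‖v‖ / R) ^ 2 * ‖c‖ := by rw [norm_smul]; field_simp
    _ < ε := hcε

lemma differentiableOn_fderiv_apply [CompleteSpace F] {O : Set E} (hO : IsOpen O)
    (hf : DifferentiableOn ℂ f O) (v : E) : DifferentiableOn ℂ (fun y => fderiv ℂ f y v) O := by
  intro x hx
  obtain ⟨R, hR, M, hsub, hM⟩ := exists_ball_two_mul_subset_norm_le hO hf.continuousOn hx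
  replace hf := hf.mono hsub
  refine (differentiableAt_of_tendstoUniformlyOn_ball hR ?_
    (tendstoUniformlyOn_differenceQuotient hR hf hM v)).differentiableWithinAt
  filter_upwards [eventually_norm_smul_lt hR v] with c hc
  refine ((hf.comp (by fun_prop) fun y hy => ?_).sub
    (hf.mono (ball_subset_ball (by linarith)))).const_smul _
  rw [mem_ball_iff_norm] at hy ⊢
  rw [add_sub_right_comm]
  linarith [norm_add_le (y - x) (c • v)]

lemma differentiableAt_of_differentiableOn_apply {G : Type*} [NormedAddCommGroup G]
    [NormedSpace ℂ G] {g : E → G →L[ℂ] F} (hR : 0 < R)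
    (hg : ∀ v, DifferentiableOn ℂ (fun y => g y v) (ball x R))
    (hM : ∀ y ∈ ball x R, ‖g y‖ ≤ M) : DifferentiableAt ℂ g x := by
  have hM_nonneg : 0 ≤ M := (norm_nonneg _).trans (hM x (mem_ball_self hR))
  have hgx (v : G) : DifferentiableAt ℂ (fun y => g y v) x :=
    (hg v).differentiableAt (ball_mem_nhds x hR)
  have hbound (v : G) : ∀ y ∈ ball x R, ‖g y v‖ ≤ M * ‖v‖ := fun y hy =>
    (g y).le_of_opNorm_le (hM y hy) v
  let T : G →L[ℂ] E →L[ℂ] F := LinearMap.mkContinuous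
    { toFun := fun v => fderiv ℂ (fun y => g y v) x
      map_add' := fun v w => by
        simp only [map_add, fderiv_fun_add (hgx v) (hgx w)]
      map_smul' := fun c v => by
        simp only [map_smul, fderiv_fun_const_smul (hgx v) c, RingHom.id_apply] }
    (2 * M / R) fun v =>
      (norm_fderiv_le_of_norm_le_on_ball hR (hg v) (hbound v)).trans_eq (by ring)
  suffices h : HasFDerivAt g T.flip x from h.differentiableAt
  refine .of_isLittleO (Asymptotics.IsBigO.trans_isLittleO
    (Asymptotics.IsBigO.of_bound (4 * M / R ^ 2) ?_)
    (Asymptotics.isLittleO_pow_sub_sub x one_lt_two))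
  filter_upwards [ball_mem_nhds x hR] with y hy
  refine ContinuousLinearMap.opNorm_le_bound _ (by positivity) fun v => ?_
  have hquad := norm_sub_sub_fderiv_le_of_norm_le_on_ball (hg v) (hbound v)
    (mem_ball_iff_norm.1 hy)
  rw [add_sub_cancel] at hquad
  refine hquad.trans_eq ?_
  rw [norm_pow, norm_norm]
  ring

lemma differentiableOn_fderiv [CompleteSpace F] {O : Set E} (hO : IsOpen O)
    (hf : DifferentiableOn ℂ f O) : DifferentiableOn ℂ (fderiv ℂ f) O := by
  intro x hx
  obtain ⟨R, hR, M, hsub, hM⟩ := exists_ball_two_mul_subset_norm_le hO hf.continuousOn hx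
  refine (differentiableAt_of_differentiableOn_apply (M := 2 * M / R) hR (fun v => ?_)
    fun y hy => ?_).differentiableWithinAt
  · exact (differentiableOn_fderiv_apply hO hf v).mono
      ((ball_subset_ball (by linarith)).trans hsub)
  · have hsub' : ball y R ⊆ ball x (2 * R) := ball_subset_ball' (by linarith [mem_ball.1 hy])
    exact norm_fderiv_le_of_norm_le_on_ball hR (hf.mono (hsub'.trans hsub))
      fun z hz => hM z (hsub' hz)

lemma differentiableOn_iteratedFDeriv [CompleteSpace F] {O : Set E} (hO : IsOpen O)
    (hf : DifferentiableOn ℂ f O) (m : ℕ) : DifferentiableOn ℂ (iteratedFDeriv ℂ m f) O := by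
  induction m with
  | zero =>
    rw [iteratedFDeriv_zero_eq_comp]
    exact (LinearIsometryEquiv.differentiable _).comp_differentiableOn hf
  | succ m ih =>
    let uncurry : (E →L[ℂ] E [×m]→L[ℂ] F) ≃ₗᵢ[ℂ] E [×(m + 1)]→L[ℂ] F :=
      (continuousMultilinearCurryLeftEquiv ℂ (fun _ => E) F).symm
    exact uncurry.differentiable.comp_differentiableOn (differentiableOn_fderiv hO ih)

lemma norm_iteratedFDeriv_le_of_norm_le_on_ball [CompleteSpace F] {ρ : ℝ} (hρ : 0 < ρ)
    (hf : DifferentiableOn ℂ f (ball x R)) (hM : ∀ z ∈ ball x R, ‖f z‖ ≤ M) (m : ℕ) :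
    ∀ y ∈ ball x (R - m * ρ), ‖iteratedFDeriv ℂ m f y‖ ≤ M * (2 / ρ) ^ m := by
  induction m with
  | zero => simpa using hM
  | succ m ih =>
    intro y hy
    have hsub : ball y ρ ⊆ ball x (R - m * ρ) :=
      ball_subset_ball' (by push_cast at hy; linarith [mem_ball.1 hy])
    have hsub' : ball x (R - m * ρ) ⊆ ball x R :=
      ball_subset_ball (sub_le_self R (by positivity))
    rw [← norm_fderiv_iteratedFDeriv]
    calc ‖fderiv ℂ (iteratedFDeriv ℂ m f) y‖ ≤ 2 * (M * (2 / ρ) ^ m) / ρ :=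
          norm_fderiv_le_of_norm_le_on_ball hρ
            ((differentiableOn_iteratedFDeriv isOpen_ball hf m).mono (hsub.trans hsub'))
            fun z hz => ih z (hsub hz)
      _ = M * (2 / ρ) ^ (m + 1) := by ring

lemma norm_inv_factorial_smul_iteratedFDeriv_le [CompleteSpace F] (hR : 0 < R)
    (hf : DifferentiableOn ℂ f (ball x R)) (hM : ∀ z ∈ ball x R, ‖f z‖ ≤ M) (m : ℕ) :
    ‖(m.factorial : ℂ)⁻¹ • iteratedFDeriv ℂ m f x‖ ≤
      M * Real.exp 1 * (2 * Real.exp 1 / R) ^ m := by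
  have hM_nonneg : 0 ≤ M := (norm_nonneg _).trans (hM x (mem_ball_self hR))
  have hx : x ∈ ball x (R - m * (R / (m + 1))) := by
    refine mem_ball_self ?_
    rw [show R - m * (R / (m + 1)) = R / (m + 1) by field_simp; ring]
    positivity
  have hderiv := norm_iteratedFDeriv_le_of_norm_le_on_ball (by positivity) hf hM m x hx
  rw [norm_smul, norm_inv, Complex.norm_natCast]
  calc (m.factorial : ℝ)⁻¹ * ‖iteratedFDeriv ℂ m f x‖
      ≤ (m.factorial : ℝ)⁻¹ * (M * (2 / (R / (m + 1))) ^ m) := by gcongr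
    _ = M * (2 / R) ^ m * ((m + 1 : ℝ) ^ m / m.factorial) := by
        rw [div_div_eq_mul_div, mul_div_right_comm, mul_pow]; ring
    _ ≤ M * (2 / R) ^ m * Real.exp (m + 1) := by
        gcongr; exact Real.pow_div_factorial_le_exp _ (by positivity) m
    _ = M * Real.exp 1 * (2 * Real.exp 1 / R) ^ m := by
        rw [Real.exp_add, ← Real.exp_one_pow m]; ring

lemma iteratedDeriv_comp_add_smul [CompleteSpace F] {O : Set E} (hO : IsOpen O)
    (hf : DifferentiableOn ℂ f O) (x h : E) (m : ℕ) :
    ∀ ζ : ℂ, x + ζ • h ∈ O → iteratedDeriv m (fun ξ : ℂ => f (x + ξ • h)) ζ =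
      iteratedFDeriv ℂ m f (x + ζ • h) fun _ => h := by
  induction m with
  | zero => simp
  | succ m ih =>
    intro ζ hζ
    have hnear : ∀ᶠ ξ : ℂ in 𝓝 ζ, x + ξ • h ∈ O :=
      (by fun_prop : Continuous fun ξ : ℂ => x + ξ • h).continuousAt.eventually (hO.mem_nhds hζ)
    have hdiff : DifferentiableAt ℂ (iteratedFDeriv ℂ m f) (x + ζ • h) :=
      (differentiableOn_iteratedFDeriv hO hf m).differentiableAt (hO.mem_nhds hζ)
    rw [iteratedDeriv_succ, EventuallyEq.deriv_eq (hnear.mono ih),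
      (hdiff.continuousMultilinear_apply_const _).deriv_comp_add_smul]
    exact (hdiff.iteratedFDeriv_succ_apply_left' (m := fun _ => h)).symm

lemma hasSum_iteratedFDeriv_of_differentiableOn_ball [CompleteSpace F]
    (hf : DifferentiableOn ℂ f (ball x R)) {h : E} (hh : ‖h‖ < R) :
    HasSum (fun m : ℕ => ((m.factorial : ℂ)⁻¹ • iteratedFDeriv ℂ m f x) fun _ => h)
      (f (x + h)) := by
  have hline : Tendsto (fun r : ℝ => r * ‖h‖) (𝓝[>] 1) (𝓝 ‖h‖) := by
    simpa using (by fun_prop : Continuous fun r : ℝ => r * ‖h‖).continuousWithinAt.tendsto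
      (x := 1) (s := Ioi 1)
  obtain ⟨r, hrR, hr : 1 < r⟩ :=
    ((hline.eventually_lt_const hh).and self_mem_nhdsWithin).exists
  have hmaps : ∀ ζ ∈ ball (0 : ℂ) r, x + ζ • h ∈ ball x R := by
    intro ζ hζ
    rw [mem_ball_zero_iff] at hζ
    rw [mem_ball, dist_self_add_left, norm_smul]
    exact (by gcongr : ‖ζ‖ * ‖h‖ ≤ r * ‖h‖).trans_lt hrR
  have hsum := Complex.hasSum_taylorSeries_on_ball (z := 1)
    (hf.comp (by fun_prop) hmaps) (by simpa using hr)
  simp only [Function.comp_def, one_smul, sub_zero, one_pow] at hsum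
  convert hsum using 2 with m
  rw [iteratedDeriv_comp_add_smul isOpen_ball hf x h m 0 (hmaps 0 (mem_ball_self (by linarith)))]
  simp

theorem analyticOnNhd_of_differentiableOn [CompleteSpace F] {O : Set E} (hO : IsOpen O)
    (hf : DifferentiableOn ℂ f O) : AnalyticOnNhd ℂ f O := by
  intro x hx
  obtain ⟨R, hR, M, hsub, hM⟩ := exists_ball_two_mul_subset_norm_le hO hf.continuousOn hx
  replace hf := hf.mono hsub
  let p : FormalMultilinearSeries ℂ E F :=
    fun m => (m.factorial : ℂ)⁻¹ • iteratedFDeriv ℂ m f x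
  let r : ℝ≥0 := ⟨2 * R / (2 * Real.exp 1), by positivity⟩
  have hr_pos : 0 < (r : ℝ) := show 0 < 2 * R / (2 * Real.exp 1) by positivity
  have hrR : (r : ℝ) < 2 * R := div_lt_self (by positivity) (by
    linarith [Real.add_one_lt_exp (one_ne_zero : (1 : ℝ) ≠ 0)])
  have hp (m : ℕ) : ‖p m‖ * (r : ℝ) ^ m ≤ M * Real.exp 1 := by
    calc ‖p m‖ * (r : ℝ) ^ m
        ≤ M * Real.exp 1 * (2 * Real.exp 1 / (2 * R)) ^ m * (r : ℝ) ^ m := by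
          gcongr
          exact norm_inv_factorial_smul_iteratedFDeriv_le (by positivity) hf hM m
      _ = M * Real.exp 1 := by
          rw [mul_assoc, ← mul_pow, show (r : ℝ) = 2 * R / (2 * Real.exp 1) from rfl]
          field_simp
          simp
  refine ⟨p, r, p.le_radius_of_bound _ hp, mod_cast hr_pos, fun {h} hh => ?_⟩
  refine hasSum_iteratedFDeriv_of_differentiableOn_ball hf (lt_trans ?_ hrR)
  simpa [← NNReal.coe_lt_coe] using hh

end Holomorphic

section DimLE

variable {k V W : Type*} [Field k] [AddCommGroup V] [Module k V] [AddCommGroup W] [Module k W]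

/-- `DimLE U d`: the subspace `U` has dimension at most `d`. Finite-dimensionality is demanded
separately because `Module.finrank` vanishes on infinite-dimensional spaces; the bound is real
so that it can be a geometric rate. -/
def DimLE (U : Submodule k V) (d : ℝ) : Prop :=
  FiniteDimensional k U ∧ (Module.finrank k U : ℝ) ≤ d

namespace DimLE

variable {U U' : Submodule k V} {d d' : ℝ}

lemma mono (hU : DimLE U d) (hd : d ≤ d') : DimLE U d' :=
  ⟨hU.1, hU.2.trans hd⟩

lemma bot : DimLE (⊥ : Submodule k V) 0 :=
  ⟨inferInstance, by simp⟩

lemma span_singleton (x : V) : DimLE (k ∙ x) 1 :=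
  ⟨inferInstance, mod_cast (finrank_span_le_card {x}).trans (by simp)⟩

lemma sup (hU : DimLE U d) (hU' : DimLE U' d') : DimLE (U ⊔ U') (d + d') := by
  have := hU.1
  have := hU'.1
  refine ⟨inferInstance, le_trans ?_ (add_le_add hU.2 hU'.2)⟩
  exact_mod_cast Submodule.finrank_add_le_finrank_add_finrank U U'

lemma finset_sup {ι : Type*} {s : Finset ι} {U : ι → Submodule k V} {d : ι → ℝ}
    (hU : ∀ i ∈ s, DimLE (U i) (d i)) : DimLE (s.sup U) (∑ i ∈ s, d i) := by
  classical
  induction s using Finset.induction_on with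
  | empty => simpa using bot
  | insert i s hi ih =>
    rw [Finset.sup_insert, Finset.sum_insert hi]
    exact (hU i (Finset.mem_insert_self i s)).sup
      (ih fun j hj => hU j (Finset.mem_insert_of_mem hj))

end DimLE

lemma exists_dimLE_forall_multilinear_mem {ι : Type*} [Fintype ι]
    (p : MultilinearMap k (fun _ : ι => V) W) {U : ι → Submodule k V} {d : ι → ℝ}
    (hU : ∀ i, DimLE (U i) (d i)) :
    ∃ U' : Submodule k W, DimLE U' (∏ i, d i) ∧ ∀ v : ι → V, (∀ i, v i ∈ U i) → p v ∈ U' := by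
  classical
  have (i : ι) : FiniteDimensional k (U i) := (hU i).1
  let b (i : ι) := Module.finBasis k (U i)
  let q : (∀ i, Fin (Module.finrank k (U i))) → W := fun r => p fun i => b i (r i)
  refine ⟨Submodule.span k (range q), ⟨.span_of_finite k (finite_range q), ?_⟩, fun v hv => ?_⟩
  · calc (Module.finrank k (Submodule.span k (range q)) : ℝ)
        ≤ Fintype.card (∀ i, Fin (Module.finrank k (U i))) :=
          mod_cast finrank_range_le_card (R := k) q
      _ = ∏ i, (Module.finrank k (U i) : ℝ) := by simp
      _ ≤ ∏ i, d i := Finset.prod_le_prod (fun i _ => by positivity) fun i _ => (hU i).2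
  · have hv_repr : v = fun i => ∑ j, (b i).repr ⟨v i, hv i⟩ j • (b i j : V) := by
      funext i
      simpa only [Submodule.coe_sum, Submodule.coe_smul] using
        congrArg Subtype.val ((b i).sum_repr ⟨v i, hv i⟩).symm
    rw [hv_repr, p.map_sum]
    refine Submodule.sum_mem _ fun r _ => ?_
    rw [p.map_smul_univ]
    exact Submodule.smul_mem _ _ (Submodule.subset_span ⟨r, rfl⟩)

end DimLE

section GeomApprox

variable {𝕜 X : Type*} [NormedField 𝕜] [NormedAddCommGroup X] [NormedSpace 𝕜 X]
  {b ρ : ℝ} {S T : Set X}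

variable (𝕜) in
/-- Geometric form of a rate of decay of Kolmogorov widths: up to a constant factor and for all
large `n`, subspaces of dimension `b ^ n` approximate `S` with error `ρ ^ n`. -/
def HasGeomApprox (b ρ : ℝ) (S : Set X) : Prop :=
  ∃ A > 0, ∀ᶠ n : ℕ in atTop, ∃ U : Submodule 𝕜 X,
    DimLE U (A * b ^ n) ∧ ∀ x ∈ S, ∃ w ∈ U, ‖x - w‖ ≤ A * ρ ^ n

namespace HasGeomApprox

lemma empty (hb : 0 ≤ b) : HasGeomApprox 𝕜 b ρ (∅ : Set X) :=
  ⟨1, one_pos, .of_forall fun _ => ⟨⊥, DimLE.bot.mono (by positivity), by simp⟩⟩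

lemma mono (hT : HasGeomApprox 𝕜 b ρ T) (hST : S ⊆ T) : HasGeomApprox 𝕜 b ρ S := by
  obtain ⟨A, hA, h⟩ := hT
  exact ⟨A, hA, h.mono fun n ⟨U, hU, hUT⟩ => ⟨U, hU, fun x hx => hUT x (hST hx)⟩⟩

lemma union (hρ : 0 ≤ ρ) (hS : HasGeomApprox 𝕜 b ρ S) (hT : HasGeomApprox 𝕜 b ρ T) :
    HasGeomApprox 𝕜 b ρ (S ∪ T) := by
  obtain ⟨A, hA, hS⟩ := hS
  obtain ⟨A', hA', hT⟩ := hT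
  refine ⟨A + A', by positivity, ?_⟩
  filter_upwards [hS, hT] with n ⟨U, hU, hUS⟩ ⟨U', hU', hUT⟩
  refine ⟨U ⊔ U', (hU.sup hU').mono (by rw [add_mul]), ?_⟩
  rintro x (hx | hx)
  · obtain ⟨w, hw, hxw⟩ := hUS x hx
    exact ⟨w, Submodule.mem_sup_left hw, hxw.trans (by gcongr; linarith)⟩
  · obtain ⟨w, hw, hxw⟩ := hUT x hx
    exact ⟨w, Submodule.mem_sup_right hw, hxw.trans (by gcongr; linarith)⟩

end HasGeomApprox

end GeomApprox

section LightWords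

/-- The words of length `m` over the alphabet `I` whose letters add up to less than `L`. When
`∑ k ∈ I, v k` is plugged into an `m`-linear map, these index the terms that are kept. -/
def lightWords (I : Finset ℕ) (L m : ℕ) : Finset (Fin m → ℕ) :=
  {κ ∈ Fintype.piFinset fun _ => I | ∑ i, κ i < L}

variable {I : Finset ℕ} {L m : ℕ} {α : ℝ}

lemma lightWords_eq_empty (hI : ∀ k ∈ I, 1 ≤ k) (hLm : L ≤ m) : lightWords I L m = ∅ := by
  refine Finset.filter_eq_empty_iff.2 fun κ hκ => not_lt.2 (hLm.trans ?_)
  simpa using Finset.card_nsmul_le_sum Finset.univ κ 1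
    fun i _ => hI _ (Fintype.mem_piFinset.1 hκ i)

lemma sum_piFinset_pow_sum (I : Finset ℕ) (m : ℕ) (α : ℝ) :
    ∑ κ ∈ Fintype.piFinset fun _ : Fin m => I, α ^ ∑ i, κ i = (∑ k ∈ I, α ^ k) ^ m := by
  simpa [Finset.prod_pow_eq_pow_sum] using
    (Finset.prod_univ_sum (fun _ : Fin m => I) fun _ k => α ^ k).symm

lemma sum_pow_sum_le_of_subset_piFinset (hα : 0 ≤ α) (hI : ∑ k ∈ I, α ^ k ≤ 1 / 2)
    {s : Finset (Fin m → ℕ)} (hs : s ⊆ Fintype.piFinset fun _ => I) :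
    ∑ κ ∈ s, α ^ ∑ i, κ i ≤ (1 / 2) ^ m := by
  calc ∑ κ ∈ s, α ^ ∑ i, κ i
      ≤ ∑ κ ∈ Fintype.piFinset fun _ : Fin m => I, α ^ ∑ i, κ i :=
        Finset.sum_le_sum_of_subset_of_nonneg hs fun _ _ _ => by positivity
    _ = (∑ k ∈ I, α ^ k) ^ m := sum_piFinset_pow_sum I m α
    _ ≤ (1 / 2) ^ m := by gcongr

variable {𝕜 X Y : Type*} [NontriviallyNormedField 𝕜] [NormedAddCommGroup X] [NormedSpace 𝕜 X]
  [NormedAddCommGroup Y] [NormedSpace 𝕜 Y] {b ρ a M : ℝ}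

lemma exists_dimLE_forall_mem_lightWords (p : MultilinearMap 𝕜 (fun _ : Fin m => X) Y)
    (hb : 1 ≤ b) (hα : 0 < α) (hα1 : α ≤ 1) (hI : ∑ k ∈ I, α ^ k ≤ 1 / 2)
    {V : ℕ → Submodule 𝕜 X} (hV : ∀ k ∈ I, k < L → DimLE (V k) ((b / α) ^ k)) :
    ∃ U : Submodule 𝕜 Y, DimLE U ((b / α ^ 2) ^ L * (1 / 2) ^ m) ∧
      ∀ κ ∈ lightWords I L m, ∀ v : ℕ → X, (∀ k ∈ I, k < L → v k ∈ V k) →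
        p (fun i => v (κ i)) ∈ U := by
  have hletter : ∀ κ ∈ lightWords I L m, ∀ i, κ i ∈ I ∧ κ i < L := fun κ hκ i =>
    ⟨Fintype.mem_piFinset.1 (Finset.mem_filter.1 hκ).1 i,
      (Finset.single_le_sum (fun _ _ => Nat.zero_le _) (Finset.mem_univ i)).trans_lt
        (Finset.mem_filter.1 hκ).2⟩
  have hword : ∀ κ ∈ lightWords I L m, ∃ U : Submodule 𝕜 Y,
      DimLE U ((b / α ^ 2) ^ L * α ^ ∑ i, κ i) ∧
        ∀ v : Fin m → X, (∀ i, v i ∈ V (κ i)) → p v ∈ U := by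
    intro κ hκ
    obtain ⟨U, hU, hpU⟩ := exists_dimLE_forall_multilinear_mem p
      fun i => hV (κ i) (hletter κ hκ i).1 (hletter κ hκ i).2
    refine ⟨U, hU.mono ?_, hpU⟩
    have hbase : 1 ≤ b / α ^ 2 := by
      rw [one_le_div (by positivity)]
      exact (pow_le_one₀ hα.le hα1).trans hb
    calc ∏ i, (b / α) ^ κ i = (b / α ^ 2 * α) ^ ∑ i, κ i := by
          rw [Finset.prod_pow_eq_pow_sum]; congr 1; field_simp
      _ = (b / α ^ 2) ^ (∑ i, κ i) * α ^ ∑ i, κ i := mul_pow _ _ _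
      _ ≤ (b / α ^ 2) ^ L * α ^ ∑ i, κ i := by
          gcongr
          exact (Finset.mem_filter.1 hκ).2.le
  choose! U hU hpU using hword
  refine ⟨(lightWords I L m).sup U, (DimLE.finset_sup hU).mono ?_, fun κ hκ v hv => ?_⟩
  · rw [← Finset.mul_sum]
    gcongr
    exact sum_pow_sum_le_of_subset_piFinset hα.le hI (Finset.filter_subset _ _)
  · exact Finset.le_sup (f := U) hκ (hpU κ hκ _ fun i => hv _ (hletter κ hκ i).1 (hletter κ hκ i).2)

lemma norm_apply_sum_sub_sum_lightWords_le (p : X [×m]→L[𝕜] Y) (hp : ‖p‖ ≤ M * a ^ m)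
    (hM : 0 ≤ M) (ha : 0 ≤ a) (hα : 0 ≤ α) (hI : ∑ k ∈ I, α ^ k ≤ 1 / 2) (hρ : 0 ≤ ρ)
    (hρ1 : ρ ≤ 1) {v : ℕ → X} (hv : ∀ k ∈ I, a * ‖v k‖ ≤ (ρ * α) ^ k) :
    ‖p (fun _ => ∑ k ∈ I, v k) - ∑ κ ∈ lightWords I L m, p fun i => v (κ i)‖ ≤
      M * ρ ^ L * (1 / 2) ^ m := by
  have hword : ∀ κ ∈ Fintype.piFinset fun _ : Fin m => I,
      ‖p fun i => v (κ i)‖ ≤ M * (ρ * α) ^ ∑ i, κ i := by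
    intro κ hκ
    calc ‖p fun i => v (κ i)‖ ≤ M * a ^ m * ∏ i, ‖v (κ i)‖ := p.le_of_opNorm_le hp _
      _ = M * ∏ i, a * ‖v (κ i)‖ := by simp [Finset.prod_mul_distrib, mul_assoc]
      _ ≤ M * ∏ i, (ρ * α) ^ κ i := by
          gcongr with i
          exact hv _ (Fintype.mem_piFinset.1 hκ i)
      _ = M * (ρ * α) ^ ∑ i, κ i := by rw [Finset.prod_pow_eq_pow_sum]
  rw [p.map_sum_finset, lightWords, ← Finset.sum_filter_not_add_sum_filter _ fun κ => ∑ i, κ i < L,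
    add_sub_cancel_right]
  calc ‖∑ κ ∈ Fintype.piFinset fun _ : Fin m => I with ¬∑ i, κ i < L, p fun i => v (κ i)‖
      ≤ ∑ κ ∈ Fintype.piFinset fun _ : Fin m => I with ¬∑ i, κ i < L,
          M * ρ ^ L * α ^ ∑ i, κ i := by
        refine norm_sum_le_of_le _ fun κ hκ => ?_
        obtain ⟨hκI, hκL⟩ := Finset.mem_filter.1 hκ
        refine (hword κ hκI).trans ?_
        rw [mul_pow, ← mul_assoc]
        gcongr M * ?_ * _
        exact pow_le_pow_of_le_one hρ hρ1 (not_lt.1 hκL)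
    _ ≤ M * ρ ^ L * (1 / 2) ^ m := by
        rw [← Finset.mul_sum]
        gcongr
        exact sum_pow_sum_le_of_subset_piFinset hα hI (Finset.filter_subset _ _)

lemma exists_dimLE_approx_hasSum (p : FormalMultilinearSeries 𝕜 X Y)
    (hp : ∀ m, ‖p m‖ ≤ M * a ^ m) (hM : 0 ≤ M) (ha : 0 ≤ a) (hb : 1 ≤ b) (hα : 0 < α)
    (hα1 : α ≤ 1) (hρ : 0 ≤ ρ) (hρ1 : ρ ≤ 1) (hI : ∑ k ∈ I, α ^ k ≤ 1 / 2)
    (hI_pos : ∀ k ∈ I, 1 ≤ k) {V : ℕ → Submodule 𝕜 X}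
    (hV : ∀ k ∈ I, k < L → DimLE (V k) ((b / α) ^ k)) :
    ∃ U : Submodule 𝕜 Y, DimLE U (2 * (b / α ^ 2) ^ L) ∧
      ∀ v : ℕ → X, (∀ k ∈ I, k < L → v k ∈ V k) → (∀ k ∈ I, a * ‖v k‖ ≤ (ρ * α) ^ k) →
        ∀ y, HasSum (fun m => p m fun _ => ∑ k ∈ I, v k) y → ∃ w ∈ U, ‖y - w‖ ≤ 2 * M * ρ ^ L := by
  choose U hU hpU using fun m =>
    exists_dimLE_forall_mem_lightWords (p m).toMultilinearMap hb hα hα1 hI hV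
  refine ⟨(Finset.range L).sup U, (DimLE.finset_sup fun m _ => hU m).mono ?_,
    fun v hvV hv y hy => ?_⟩
  · rw [← Finset.mul_sum, mul_comm]
    gcongr
    exact sum_le_hasSum _ (fun _ _ => by positivity) hasSum_geometric_two
  · let kept (m : ℕ) : Y := ∑ κ ∈ lightWords I L m, p m fun i => v (κ i)
    have hkept : HasSum kept (∑ m ∈ Finset.range L, kept m) :=
      hasSum_sum_of_ne_finset_zero fun m hm => by
        simp [kept, lightWords_eq_empty hI_pos (not_lt.1 (Finset.mem_range.not.1 hm))]
    refine ⟨_, Submodule.sum_mem _ fun m hm => Finset.le_sup (f := U) hm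
      (Submodule.sum_mem _ fun κ hκ => hpU m κ hκ v hvV), ?_⟩
    calc ‖y - ∑ m ∈ Finset.range L, kept m‖ ≤ M * ρ ^ L * 2 :=
          (hy.sub hkept).norm_le_of_bounded (hasSum_geometric_two.mul_left _) fun m =>
            norm_apply_sum_sub_sum_lightWords_le (p m) (hp m) hM ha hα.le hI hρ hρ1 hv
      _ = 2 * M * ρ ^ L := by ring

end LightWords

section AnalyticImage

variable {𝕜 X Y : Type*} [NontriviallyNormedField 𝕜] [NormedAddCommGroup X] [NormedSpace 𝕜 X]
  [NormedAddCommGroup Y] [NormedSpace 𝕜 Y]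

-- Telescoping along `x₀, w (k₀ + 1), …, w L, x`: the remainder `x - w L` is itself a letter, of
-- weight `L`, so no light word contains it and it need not lie in any of the subspaces.
lemma exists_telescoping_sum_eq_sub {W : ℕ → Submodule 𝕜 X} {x x₀ : X} {ε : ℕ → ℝ} {k₀ L : ℕ}
    (hε : Antitone ε) (hε_nonneg : ∀ k, 0 ≤ ε k) (hL : k₀ ≤ L) (hx₀ : ‖x - x₀‖ ≤ ε k₀)
    (hW : ∀ k, k₀ ≤ k → ∃ w ∈ W k, ‖x - w‖ ≤ ε k) :
    ∃ v : ℕ → X, ∑ k ∈ Finset.Ico k₀ (L + 1), v k = x - x₀ ∧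
      (∀ k ∈ Finset.Ico k₀ (L + 1), ‖v k‖ ≤ 2 * ε k) ∧
      ∀ k ∈ Finset.Ico k₀ (L + 1), k < L → v k ∈ W k ⊔ W (k + 1) ⊔ 𝕜 ∙ x₀ := by
  choose! w hwW hw using hW
  let g (k : ℕ) : X := if k = k₀ then x₀ else if k ≤ L then w k else x
  have hg_dist : ∀ k, k₀ ≤ k → ‖x - g k‖ ≤ ε k := by
    intro k hk
    simp only [g]
    split_ifs with h h'
    · exact h ▸ hx₀
    · exact hw k hk
    · simpa using hε_nonneg k
  have hg_mem : ∀ k, k₀ ≤ k → k ≤ L → g k ∈ W k ⊔ 𝕜 ∙ x₀ := by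
    intro k hk hkL
    simp only [g, if_pos hkL]
    split_ifs
    · exact Submodule.mem_sup_right (Submodule.mem_span_singleton_self x₀)
    · exact Submodule.mem_sup_left (hwW k hk)
  refine ⟨fun k => g (k + 1) - g k, ?_, fun k hk => ?_, fun k hk hkL => ?_⟩
  · rw [Finset.sum_Ico_sub g (by omega)]
    simp [g, show L + 1 ≠ k₀ by omega]
  · have hk := (Finset.mem_Ico.1 hk).1
    beta_reduce
    rw [← sub_sub_sub_cancel_left (g k) (g (k + 1)) x, two_mul]
    exact norm_sub_le_of_le (hg_dist k hk)
      ((hg_dist (k + 1) (by omega)).trans (hε k.le_succ))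
  · have hk := (Finset.mem_Ico.1 hk).1
    have hle : W k ⊔ 𝕜 ∙ x₀ ≤ W k ⊔ W (k + 1) ⊔ 𝕜 ∙ x₀ := sup_le_sup_right le_sup_left _
    have hle' : W (k + 1) ⊔ 𝕜 ∙ x₀ ≤ W k ⊔ W (k + 1) ⊔ 𝕜 ∙ x₀ := sup_le_sup_right le_sup_right _
    exact Submodule.sub_mem _ (hle' (hg_mem (k + 1) (by omega) hkL)) (hle (hg_mem k hk hkL.le))

lemma eventually_mul_pow_le_one {α : ℝ} (hα : 0 ≤ α) (hα1 : α < 1) (c : ℝ) :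
    ∀ᶠ k : ℕ in atTop, c * α ^ k ≤ 1 := by
  have hlim : Tendsto (fun k : ℕ => c * α ^ k) atTop (𝓝 0) := by
    simpa using (tendsto_pow_atTop_nhds_zero_of_lt_one hα hα1).const_mul c
  exact hlim.eventually_le_const one_pos

lemma sum_Ico_pow_le_half {α : ℝ} (hα : 0 ≤ α) (hα1 : α < 1) {k₀ : ℕ}
    (hk₀ : 2 / (1 - α) * α ^ k₀ ≤ 1) (n : ℕ) : ∑ k ∈ Finset.Ico k₀ n, α ^ k ≤ 1 / 2 := by
  refine (geom_sum_Ico_le_of_lt_one hα hα1).trans ?_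
  linarith [show 2 / (1 - α) * α ^ k₀ = 2 * (α ^ k₀ / (1 - α)) by ring]

lemma dimLE_sup_sup_span_singleton {W W' : Submodule 𝕜 X} {A b α : ℝ} {k : ℕ} (hb : 1 ≤ b)
    (hα : 0 < α) (hW : DimLE W (A * b ^ k)) (hW' : DimLE W' (A * b ^ (k + 1)))
    (hk : (A * (1 + b) + 1) * α ^ k ≤ 1) (x₀ : X) :
    DimLE (W ⊔ W' ⊔ 𝕜 ∙ x₀) ((b / α) ^ k) := by
  refine ((hW.sup hW').sup (DimLE.span_singleton x₀)).mono ?_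
  rw [div_pow, le_div_iff₀ (by positivity)]
  calc (A * b ^ k + A * b ^ (k + 1) + 1) * α ^ k
      ≤ (A * b ^ k + A * b ^ (k + 1) + b ^ k) * α ^ k := by
        gcongr
        exact one_le_pow₀ hb
    _ = b ^ k * ((A * (1 + b) + 1) * α ^ k) := by ring
    _ ≤ b ^ k := mul_le_of_le_one_right (by positivity) hk

lemma exists_dimLE_approx_of_hasSum_sub (p : FormalMultilinearSeries 𝕜 X Y)
    {W : ℕ → Submodule 𝕜 X} {x₀ : X} {A M a b α β : ℝ} {k₀ L : ℕ}
    (hp : ∀ m, ‖p m‖ ≤ M * a ^ m) (hM : 0 ≤ M) (ha : 0 ≤ a) (hA : 0 ≤ A) (hb : 1 ≤ b)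
    (hα : 0 < α) (hα1 : α < 1) (hβ : 0 ≤ β) (hβα : β ≤ α ^ 2) (hk₀ : 1 ≤ k₀) (hL : k₀ ≤ L)
    (hsum : 2 / (1 - α) * α ^ k₀ ≤ 1) (hnorm : ∀ k, k₀ ≤ k → 2 * a * A * α ^ k ≤ 1)
    (hdim : ∀ k, k₀ ≤ k → DimLE (W k ⊔ W (k + 1) ⊔ 𝕜 ∙ x₀) ((b / α) ^ k)) :
    ∃ U : Submodule 𝕜 Y, DimLE U (2 * (b / α ^ 2) ^ L) ∧
      ∀ x y, ‖x - x₀‖ ≤ A * β ^ k₀ → (∀ k, k₀ ≤ k → ∃ w ∈ W k, ‖x - w‖ ≤ A * β ^ k) →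
        HasSum (fun m => p m fun _ => x - x₀) y → ∃ w ∈ U, ‖y - w‖ ≤ 2 * M * (β / α ^ 2) ^ L := by
  have hβ1 : β ≤ 1 := hβα.trans (pow_le_one₀ hα.le hα1.le)
  have hε : Antitone fun k : ℕ => A * β ^ k :=
    (pow_right_anti₀ hβ hβ1).const_mul hA
  obtain ⟨U, hU, hUy⟩ := exists_dimLE_approx_hasSum (ρ := β / α ^ 2) (L := L) p hp hM ha hb hα
    hα1.le (by positivity) (div_le_one_of_le₀ hβα (by positivity))
    (sum_Ico_pow_le_half hα.le hα1 hsum (L + 1))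
    (fun k hk => hk₀.trans (Finset.mem_Ico.1 hk).1) fun k hk _ => hdim k (Finset.mem_Ico.1 hk).1
  refine ⟨U, hU, fun x y hx₀ hW hy => ?_⟩
  obtain ⟨v, hv_sum, hv_norm, hv_mem⟩ :=
    exists_telescoping_sum_eq_sub hε (fun k => by positivity) hL hx₀ hW
  refine hUy v hv_mem (fun k hk => ?_) y (by simpa only [hv_sum] using hy)
  rw [show β / α ^ 2 * α = β / α by field_simp, div_pow, le_div_iff₀ (by positivity)]
  calc a * ‖v k‖ * α ^ k ≤ a * (2 * (A * β ^ k)) * α ^ k := by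
        gcongr
        exact hv_norm k hk
    _ = β ^ k * (2 * a * A * α ^ k) := by ring
    _ ≤ β ^ k := mul_le_of_le_one_right (by positivity) (hnorm k (Finset.mem_Ico.1 hk).1)

theorem exists_nhds_hasGeomApprox_image {u : X → Y} {x₀ : X} (hu : AnalyticAt 𝕜 u x₀) {K : Set X}
    {b α β : ℝ} (hK : HasGeomApprox 𝕜 b β K) (hb : 1 ≤ b) (hα : 0 < α) (hα1 : α < 1)
    (hβ : 0 < β) (hβα : β ≤ α ^ 2) :
    ∃ s ∈ 𝓝 x₀, HasGeomApprox 𝕜 (b / α ^ 2) (β / α ^ 2) (u '' (K ∩ s)) := by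
  obtain ⟨p, hp⟩ := hu
  obtain ⟨M, a, hM, ha, hpM⟩ := p.le_mul_pow_of_radius_pos hp.radius_pos
  obtain ⟨A, hA, hAK⟩ := hK
  have hsmall (c : ℝ) : ∀ᶠ k₀ : ℕ in atTop, ∀ k, k₀ ≤ k → c * α ^ k ≤ 1 :=
    eventually_forall_ge_atTop.2 (eventually_mul_pow_le_one hα.le hα1 c)
  obtain ⟨k₀, hk₀, hW, hsum, hnorm, hdim⟩ :=
    ((eventually_ge_atTop 1).and <| (eventually_forall_ge_atTop.2 hAK).and <|
      (hsmall (2 / (1 - α))).and <| (hsmall (2 * a * A)).and (hsmall (A * (1 + b) + 1))).exists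
  choose! W hW hWK using hW
  refine ⟨closedBall x₀ (A * β ^ k₀) ∩ {x | HasSum (fun m => p m fun _ => x - x₀) (u x)},
    inter_mem (closedBall_mem_nhds x₀ (by positivity)) hp.eventually_hasSum_sub,
    2 + 2 * M, by positivity, ?_⟩
  filter_upwards [eventually_ge_atTop k₀] with L hL
  obtain ⟨U, hU, hUy⟩ := exists_dimLE_approx_of_hasSum_sub (x₀ := x₀) p hpM hM.le ha.le hA.le hb
    hα hα1 hβ.le hβα hk₀ hL (hsum k₀ le_rfl) hnorm fun k hk =>
      dimLE_sup_sup_span_singleton hb hα (hW k hk) (hW (k + 1) (by omega)) (hdim k hk) x₀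
  refine ⟨U, hU.mono (by gcongr; linarith), ?_⟩
  rintro _ ⟨x, ⟨hxK, hx_ball, hx_sum⟩, rfl⟩
  obtain ⟨w, hwU, hw⟩ :=
    hUy x (u x) (mem_closedBall_iff_norm.1 hx_ball) (fun k hk => hWK k hk x hxK) hx_sum
  exact ⟨w, hwU, hw.trans (by gcongr; linarith)⟩

theorem hasGeomApprox_image {u : X → Y} {K : Set X} (hK : IsCompact K)
    (hu : AnalyticOnNhd 𝕜 u K) {b α β : ℝ} (happrox : HasGeomApprox 𝕜 b β K) (hb : 1 ≤ b)
    (hα : 0 < α) (hα1 : α < 1) (hβ : 0 < β) (hβα : β ≤ α ^ 2) :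
    HasGeomApprox 𝕜 (b / α ^ 2) (β / α ^ 2) (u '' K) := by
  refine hK.induction_on (p := fun S => HasGeomApprox 𝕜 (b / α ^ 2) (β / α ^ 2) (u '' S))
    ?_ (fun S T hST hT => hT.mono (image_mono hST)) (fun S T hS hT => ?_) fun x hx => ?_
  · simpa using HasGeomApprox.empty (by positivity)
  · rw [image_union]
    exact hS.union (by positivity) hT
  · obtain ⟨s, hs, hus⟩ := exists_nhds_hasGeomApprox_image (hu x hx) happrox hb hα hα1 hβ hβα
    exact ⟨K ∩ s, inter_mem_nhdsWithin K hs, hus⟩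

end AnalyticImage

section Width

lemma exists_le_finrank_eq_or_dimLE_top {k V : Type*} [Field k] [AddCommGroup V] [Module k V]
    {U : Submodule k V} {n : ℕ} (hU : DimLE U n) :
    (∃ W : Submodule k V, U ≤ W ∧ FiniteDimensional k W ∧ Module.finrank k W = n) ∨
      DimLE (⊤ : Submodule k V) n := by
  obtain ⟨hU_fin, hUn⟩ := hU
  replace hUn : Module.finrank k U ≤ n := mod_cast hUn
  induction n, hUn using Nat.le_induction with
  | base => exact .inl ⟨U, le_rfl, hU_fin, rfl⟩
  | succ n _ ih =>
    obtain ⟨W, hUW, hW, rfl⟩ | htop := ih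
    · by_cases hW_top : W = ⊤
      · exact .inr ⟨hW_top ▸ hW, by subst hW_top; simp⟩
      obtain ⟨v, -, hv⟩ := SetLike.exists_of_lt (lt_top_iff_ne_top.2 hW_top)
      have hv0 : v ≠ 0 := fun h => hv (h ▸ W.zero_mem)
      have hinf : W ⊓ k ∙ v = ⊥ := ((Submodule.disjoint_span_singleton' hv0).2 hv).eq_bot
      refine .inl ⟨W ⊔ k ∙ v, hUW.trans le_sup_left, inferInstance, ?_⟩
      rw [← add_zero (Module.finrank k ↥(W ⊔ k ∙ v)), ← finrank_bot k V, ← hinf,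
        Submodule.finrank_sup_add_finrank_inf_eq, finrank_span_singleton hv0]
    · exact .inr (htop.mono (by simp))

variable {X : Type*} [NormedAddCommGroup X] [NormedSpace ℂ X] {S : Set X} {n : ℕ}

lemma kolWidth_eq_iInf_iSup_infDist (n : ℕ) (S : Set X) :
    kolWidth n S = ⨅ W : {W : Submodule ℂ X // Module.finrank ℂ W = n},
      ⨆ x : S, infDist (x : X) W.1 := by
  simp only [infDist_eq_iInf, dist_eq_norm]
  rfl

lemma kolWidth_nonneg (n : ℕ) (S : Set X) : 0 ≤ kolWidth n S := by
  rw [kolWidth_eq_iInf_iSup_infDist]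
  exact Real.iInf_nonneg fun _ => Real.iSup_nonneg fun _ => infDist_nonneg

lemma kolWidth_le_of_finrank_eq {W : Submodule ℂ X} (hW : Module.finrank ℂ W = n) {ε : ℝ}
    (hε : 0 ≤ ε) (h : ∀ x ∈ S, ∃ w ∈ W, ‖x - w‖ ≤ ε) : kolWidth n S ≤ ε := by
  rw [kolWidth_eq_iInf_iSup_infDist]
  refine ciInf_le_of_le ⟨0, forall_mem_range.2 fun _ => Real.iSup_nonneg fun _ => infDist_nonneg⟩
    ⟨W, hW⟩ (Real.iSup_le (fun x => ?_) hε)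
  obtain ⟨w, hw, hxw⟩ := h x x.2
  exact (infDist_le_dist_of_mem hw).trans (dist_eq_norm (x : X) w ▸ hxw)

lemma kolWidth_le {U : Submodule ℂ X} (hU : DimLE U n) {ε : ℝ} (hε : 0 ≤ ε)
    (h : ∀ x ∈ S, ∃ w ∈ U, ‖x - w‖ ≤ ε) : kolWidth n S ≤ ε := by
  obtain ⟨W, hUW, -, hW⟩ | ⟨htop_fin, htop⟩ := exists_le_finrank_eq_or_dimLE_top hU
  · exact kolWidth_le_of_finrank_eq hW hε fun x hx =>
      (h x hx).imp fun w hw => hw.imp_left (hUW ·)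
  cases isEmpty_or_nonempty {W : Submodule ℂ X // Module.finrank ℂ W = n} with
  | inl hempty =>
    -- `dim X < n`, and the infimum over no subspaces is the junk value `0`.
    rwa [kolWidth, Real.iInf_of_isEmpty]
  | inr hne =>
    obtain ⟨W, hW⟩ := hne
    have hW_top : W = ⊤ :=
      Submodule.eq_of_le_of_finrank_le le_top (hW ▸ mod_cast htop)
    exact kolWidth_le_of_finrank_eq hW hε fun x _ => ⟨x, by simp [hW_top], by simpa⟩

lemma bddAbove_range_infDist (hS : Bornology.IsBounded S) (W : Submodule ℂ X) :
    BddAbove (range fun x : S => infDist (x : X) W) := by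
  obtain ⟨R, hR⟩ := hS.exists_norm_le
  refine ⟨R, forall_mem_range.2 fun x => ?_⟩
  exact (infDist_le_dist_of_mem W.zero_mem).trans (by simpa using hR x x.2)

lemma exists_dimLE_approx_of_kolWidth_lt (hS : Bornology.IsBounded S) (hn : n ≠ 0) {δ : ℝ}
    (hδ : kolWidth n S < δ) :
    ∃ W : Submodule ℂ X, DimLE W n ∧ ∀ x ∈ S, ∃ w ∈ W, ‖x - w‖ ≤ δ := by
  obtain ⟨W₀, -, -, hW₀⟩ | htop :=
    exists_le_finrank_eq_or_dimLE_top (DimLE.bot (k := ℂ) (V := X).mono n.cast_nonneg)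
  · have : Nonempty {W : Submodule ℂ X // Module.finrank ℂ W = n} := ⟨⟨W₀, hW₀⟩⟩
    rw [kolWidth_eq_iInf_iSup_infDist] at hδ
    obtain ⟨⟨W, hW⟩, hWδ⟩ := exists_lt_of_ciInf_lt hδ
    refine ⟨W, ⟨.of_finrank_pos (by omega), by rw [hW]⟩, fun x hx => ?_⟩
    have hx_dist : infDist x W < δ := (le_ciSup (bddAbove_range_infDist hS W) ⟨x, hx⟩).trans_lt hWδ
    obtain ⟨w, hw, hxw⟩ := (infDist_lt_iff ⟨0, W.zero_mem⟩).1 hx_dist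
    exact ⟨w, hw, (dist_eq_norm x w ▸ hxw).le⟩
  · exact ⟨⊤, htop, fun x _ => ⟨x, trivial, by simpa using (kolWidth_nonneg n S).trans hδ.le⟩⟩

lemma hasGeomApprox_of_rpow_mul_kolWidth_le (hS : Bornology.IsBounded S) {s C : ℝ}
    (hC : ∀ n : ℕ, 1 ≤ n → (n : ℝ) ^ s * kolWidth n S ≤ C) :
    HasGeomApprox ℂ 2 (2 ^ (-s)) S := by
  refine ⟨|C| + 1, by positivity, .of_forall fun k => ?_⟩
  have hpow : ((2 ^ k : ℕ) : ℝ) ^ s = (((2 : ℝ) ^ (-s)) ^ k)⁻¹ := by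
    rw [Nat.cast_pow, Nat.cast_ofNat, Real.rpow_neg two_pos.le, inv_pow, inv_inv,
      Real.rpow_pow_comm two_pos.le]
  have hwidth : kolWidth (2 ^ k) S < (|C| + 1) * ((2 : ℝ) ^ (-s)) ^ k := by
    have h := hC (2 ^ k) Nat.one_le_two_pow
    rw [hpow, inv_mul_le_iff₀ (by positivity), mul_comm] at h
    refine h.trans_lt ?_
    gcongr
    linarith [le_abs_self C]
  obtain ⟨W, hW, hSW⟩ := exists_dimLE_approx_of_kolWidth_lt hS (by positivity) hwidth
  refine ⟨W, hW.mono ?_, hSW⟩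
  rw [Nat.cast_pow, Nat.cast_ofNat]
  exact le_mul_of_one_le_left (by positivity) (by linarith [abs_nonneg C])

lemma rpow_mul_pow_le {A b ρ t x : ℝ} {L : ℕ} (hA : 0 ≤ A) (hb : 0 ≤ b) (hρ : 0 ≤ ρ) (ht : 0 ≤ t)
    (hbρ : b ^ t * ρ ≤ 1) (hx : 0 ≤ x) (hxL : x ≤ A * b ^ (L + 1)) :
    x ^ t * ρ ^ L ≤ (A * b) ^ t := by
  calc x ^ t * ρ ^ L ≤ (A * b ^ (L + 1)) ^ t * ρ ^ L := by gcongr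
    _ = (A * b) ^ t * (b ^ t * ρ) ^ L := by
        rw [pow_succ', ← mul_assoc, Real.mul_rpow (by positivity) (by positivity), mul_pow,
          Real.rpow_pow_comm hb]
        ring
    _ ≤ (A * b) ^ t := mul_le_of_le_one_right (by positivity) (pow_le_one₀ (by positivity) hbρ)

lemma exists_rpow_mul_kolWidth_le {b ρ t : ℝ} (hS : HasGeomApprox ℂ b ρ S) (hb : 1 < b)
    (hρ : 0 ≤ ρ) (ht : 0 ≤ t) (hbρ : b ^ t * ρ ≤ 1) :
    ∃ C : ℝ, ∀ n : ℕ, (n : ℝ) ^ t * kolWidth n S ≤ C := by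
  obtain ⟨A, hA, hAS⟩ := hS
  obtain ⟨k₀, hk₀⟩ := eventually_atTop.1 hAS
  suffices h : ∀ᶠ n : ℕ in atTop, (n : ℝ) ^ t * kolWidth n S ≤ A * (A * b) ^ t by
    simpa [BddAbove, Set.Nonempty, mem_upperBounds] using
      (isBoundedUnder_of_eventually_le h).bddAbove_range
  filter_upwards [tendsto_natCast_atTop_atTop.eventually_ge_atTop (A * b ^ k₀)] with n hn
  have hn' : b ^ k₀ ≤ n / A := by rwa [le_div_iff₀' hA]
  obtain ⟨L, hLn, hnL⟩ := exists_nat_pow_near ((one_le_pow₀ hb.le).trans hn') hb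
  have hkL : k₀ ≤ L := Nat.lt_succ_iff.1 ((pow_lt_pow_iff_right₀ hb).1 (hn'.trans_lt hnL))
  rw [le_div_iff₀' hA] at hLn
  rw [div_lt_iff₀' hA] at hnL
  obtain ⟨U, hU, hSU⟩ := hk₀ L hkL
  calc (n : ℝ) ^ t * kolWidth n S ≤ (n : ℝ) ^ t * (A * ρ ^ L) := by
        gcongr
        exact kolWidth_le (hU.mono hLn) (by positivity) hSU
    _ = A * ((n : ℝ) ^ t * ρ ^ L) := by ring
    _ ≤ A * (A * b) ^ t := by
        gcongr
        exact rpow_mul_pow_le hA.le (by positivity) hρ ht hbρ n.cast_nonneg hnL.le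

-- Requiring `(2 / α ^ 2) ^ t * (2 ^ (-s) / α ^ 2) = 1` forces `α ^ 2 = 2 ^ (-(s - t) / (t + 1))`.
lemma exists_lt_one_rpow_mul_eq_one {s t : ℝ} (ht : 0 ≤ t) (hts : t < s) :
    ∃ α : ℝ, 0 < α ∧ α < 1 ∧ (2 : ℝ) ^ (-s) ≤ α ^ 2 ∧
      (2 / α ^ 2) ^ t * ((2 : ℝ) ^ (-s) / α ^ 2) = 1 := by
  set q := (s - t) / (t + 1)
  have hq : 0 < q := div_pos (by linarith) (by linarith)
  have hq_mul : q * (t + 1) = s - t := div_mul_cancel₀ _ (by linarith)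
  have hα2 : ((2 : ℝ) ^ (-(q / 2))) ^ 2 = 2 ^ (-q) := by
    rw [← Real.rpow_mul_natCast two_pos.le]
    congr 1
    push_cast
    ring
  refine ⟨2 ^ (-(q / 2)), by positivity,
    Real.rpow_lt_one_of_one_lt_of_neg one_lt_two (by linarith), ?_, ?_⟩
  · rw [hα2, Real.rpow_le_rpow_left_iff one_lt_two]
    nlinarith
  · rw [hα2]
    calc ((2 : ℝ) / 2 ^ (-q)) ^ t * (2 ^ (-s) / 2 ^ (-q))
        = ((2 : ℝ) ^ (1 - -q)) ^ t * 2 ^ (-s - -q) := by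
          rw [Real.rpow_sub two_pos, Real.rpow_sub two_pos, Real.rpow_one]
      _ = 2 ^ (q * (t + 1) - (s - t)) := by
          rw [← Real.rpow_mul two_pos.le, ← Real.rpow_add two_pos]
          congr 1
          ring
      _ = 1 := by rw [hq_mul, sub_self, Real.rpow_zero]

end Width

theorem kolWidth_holomorphic_image_general {X Y : Type*} [NormedAddCommGroup X] [NormedSpace ℂ X]
    [NormedAddCommGroup Y] [NormedSpace ℂ Y] {K : Set X} (hK : IsCompact K) {u : X → Y}
    (hu : AnalyticOnNhd ℂ u K) {s t : ℝ} (hs : 0 < s) (hts : t < s)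
    (hwidth : ∃ C : ℝ, ∀ n : ℕ, 1 ≤ n → (n : ℝ) ^ s * kolWidth n K ≤ C) :
    ∃ C : ℝ, ∀ n : ℕ, 1 ≤ n → (n : ℝ) ^ t * kolWidth n (u '' K) ≤ C := by
  wlog ht : 0 ≤ t generalizing t
  · obtain ⟨C, hC⟩ := this hs le_rfl
    refine ⟨C, fun n hn => le_trans ?_ (hC n hn)⟩
    gcongr
    · exact kolWidth_nonneg n _
    · exact mod_cast hn
    · exact (not_le.1 ht).le
  obtain ⟨C, hC⟩ := hwidth
  obtain ⟨α, hα, hα1, hsα, hαt⟩ := exists_lt_one_rpow_mul_eq_one ht hts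
  have himage : HasGeomApprox ℂ (2 / α ^ 2) (2 ^ (-s) / α ^ 2) (u '' K) :=
    hasGeomApprox_image hK hu (hasGeomApprox_of_rpow_mul_kolWidth_le hK.isBounded hC)
      one_le_two hα hα1 (by positivity) hsα
  have hbase : 1 < 2 / α ^ 2 := by
    rw [one_lt_div (by positivity)]
    linarith [pow_le_one₀ (n := 2) hα.le hα1.le]
  obtain ⟨D, hD⟩ := exists_rpow_mul_kolWidth_le himage hbase (by positivity) ht hαt.le
  exact ⟨D, fun n _ => hD n⟩

/-- **Kolmogorov widths under holomorphic mappings** (Cohen-DeVore, Theorem 1.1).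
Let `X, Y` be complex Banach spaces, `O ⊆ X` open, and let `u` be holomorphic on `O`
(i.e. complex Fréchet differentiable at each point of `O`) and uniformly bounded on `O`
by `B`.  If `K ⊆ O` is compact, then for every `s > 1` and `t < s - 1`:
if `sup_{n ≥ 1} n^s d_n(K)_X < ∞`, then `sup_{n ≥ 1} n^t d_n(u(K))_Y < ∞`. -/
theorem kolWidth_holomorphic_image
    {X Y : Type*} [NormedAddCommGroup X] [NormedSpace ℂ X] [CompleteSpace X]
    [NormedAddCommGroup Y] [NormedSpace ℂ Y] [CompleteSpace Y]
    (O : Set X) (hO : IsOpen O) (u : X → Y) (hu : DifferentiableOn ℂ u O)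
    (B : ℝ) (hB : ∀ x ∈ O, ‖u x‖ ≤ B)
    (K : Set X) (hK : IsCompact K) (hKO : K ⊆ O)
    (s t : ℝ) (hs : 1 < s) (hts : t < s - 1)
    (hwidth : ∃ C : ℝ, ∀ n : ℕ, 1 ≤ n → (n : ℝ) ^ s * kolWidth n K ≤ C) :
    ∃ C : ℝ, ∀ n : ℕ, 1 ≤ n → (n : ℝ) ^ t * kolWidth n (u '' K) ≤ C := by
  exact kolWidth_holomorphic_image_general hK
    ((analyticOnNhd_of_differentiableOn hO hu).mono hKO) (by linarith) (by linarith) hwidth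
end

section
/- Let X, Y, Z be complex Banach spaces, let P : Y × X → Z be holomorphic on all of Y × X, and let K ⊆ X be compact. Assume: (ii) for each a ∈ K there exists a unique u(a) ∈ Y with P(u(a), a) = 0; and (iii) for each a ∈ K the partial Fréchet derivative ∂_u P(u(a), a) is an isomorphism (a bounded linear bijection with bounded inverse) from Y onto Z. Then there exist an open set O ⊆ X containing K, a finite constant B, and a map g : O → Y which is holomorphic on O, satisfies g(a) = u(a) for all a ∈ K, satisfies P(g(b), b) = 0 for all b ∈ O, and is uniformly bounded: sup_{b∈O} ‖g(b)‖_Y ≤ B. -/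
/-!
The map `Φ (v, a) = (a, P (v, a))` has an invertible derivative at every point of the graph
`{(u a, a) | a ∈ K}`. That graph is compact, because `u` is continuous by uniqueness of the
solutions and the implicit function theorem, and `Φ` is injective on it. Hence `Φ` is injective on
a neighbourhood of the graph, so that its local inverses glue to one map `Ψ`, and the first
component of `Ψ (b, 0)` is the required solution map.
-/

open Filter Metric Set Topology

section Holomorphic

variable {E F : Type*} [NormedAddCommGroup E] [NormedSpace ℂ E]
  [NormedAddCommGroup F] [NormedSpace ℂ F] {f : E → F}

-- The remainder `f w - f' w` varies by `o(r)` on balls of radius `r` near `x`, so the Cauchy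
-- estimate makes its derivative `o(1)`.
theorem continuousAt_fderiv_of_eventually_differentiableAt {x : E}
    (hf : ∀ᶠ z in 𝓝 x, DifferentiableAt ℂ f z) : ContinuousAt (fderiv ℂ f) x := by
  refine Metric.continuousAt_iff'.2 fun ε hε => ?_
  set L := fderiv ℂ f x
  have remainder_le : ∀ᶠ w in 𝓝 x, ‖f w - f x - L (w - x)‖ ≤ ε / 4 * ‖w - x‖ :=
    hf.self_of_nhds.hasFDerivAt.isLittleO.def (by positivity)
  obtain ⟨R, hR, hball⟩ := Metric.eventually_nhds_iff_ball.1 (hf.and remainder_le)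
  obtain ⟨r, hr, rfl⟩ : ∃ r > 0, 2 * r = R := ⟨R / 2, by positivity, by ring⟩
  filter_upwards [ball_mem_nhds x hr] with z hz
  have ball_subset : ball z r ⊆ ball x (2 * r) :=
    ball_subset_ball' (by linarith [mem_ball.1 hz])
  have differentiableOn_sub : DifferentiableOn ℂ (fun w => f w - L w) (ball z r) := fun w hw =>
    ((hball w (ball_subset hw)).1.sub L.differentiableAt).differentiableWithinAt
  have mapsTo_closedBall :
      MapsTo (fun w => f w - L w) (ball z r) (closedBall (f z - L z) (3 / 4 * ε * r)) := by
    intro w hw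
    have hwx : ‖w - x‖ ≤ 2 * r := (mem_ball_iff_norm.1 (ball_subset hw)).le
    have hzx : ‖z - x‖ ≤ r := (mem_ball_iff_norm.1 hz).le
    rw [mem_closedBall, dist_eq_norm]
    calc ‖f w - L w - (f z - L z)‖
        = ‖(f w - f x - L (w - x)) - (f z - f x - L (z - x))‖ := by
          simp only [map_sub]; congr 1; abel
      _ ≤ ‖f w - f x - L (w - x)‖ + ‖f z - f x - L (z - x)‖ := norm_sub_le _ _
      _ ≤ ε / 4 * ‖w - x‖ + ε / 4 * ‖z - x‖ :=
          add_le_add (hball w (ball_subset hw)).2 (hball z (ball_subset (mem_ball_self hr))).2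
      _ ≤ ε / 4 * (2 * r) + ε / 4 * r := by gcongr
      _ = 3 / 4 * ε * r := by ring
  have fderiv_sub : fderiv ℂ (fun w => f w - L w) z = fderiv ℂ f z - L := by
    rw [fderiv_fun_sub (hball z (ball_subset (mem_ball_self hr))).1 L.differentiableAt, L.fderiv]
  calc dist (fderiv ℂ f z) L = ‖fderiv ℂ (fun w => f w - L w) z‖ := by
        rw [dist_eq_norm, fderiv_sub]
    _ ≤ 3 / 4 * ε * r / r :=
        Complex.norm_fderiv_le_div_of_mapsTo_ball differentiableOn_sub mapsTo_closedBall hr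
    _ = 3 / 4 * ε := mul_div_cancel_right₀ _ hr.ne'
    _ < ε := by linarith

theorem contDiffAt_one_of_eventually_differentiableAt {x : E}
    (hf : ∀ᶠ z in 𝓝 x, DifferentiableAt ℂ f z) : ContDiffAt ℂ 1 f x :=
  contDiffAt_one_iff.2 ⟨fderiv ℂ f, {z | ∀ᶠ w in 𝓝 z, DifferentiableAt ℂ f w},
    hf.eventually_nhds,
    fun _ hz => (continuousAt_fderiv_of_eventually_differentiableAt hz).continuousWithinAt,
    fun _ hz => hz.self_of_nhds.hasFDerivAt⟩

end Holomorphic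

section InverseFunction

theorem exists_eventuallyEq_localInverse_of_isCompact {𝕜 E F : Type*} [NontriviallyNormedField 𝕜]
    [NormedAddCommGroup E] [NormedSpace 𝕜 E] [CompleteSpace E]
    [NormedAddCommGroup F] [NormedSpace 𝕜 F]
    {f : E → F} {f' : E → E ≃L[𝕜] F} {C : Set E} (hC : IsCompact C) (hinj : InjOn f C)
    (hf : ∀ x ∈ C, HasStrictFDerivAt f (f' x : E →L[𝕜] F) x) :
    ∃ g : F → E, ∀ x (hx : x ∈ C), g =ᶠ[𝓝 (f x)] (hf x hx).localInverse f (f' x) x := by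
  have locally_injOn : ∀ x ∈ C, ∃ s ∈ 𝓝 x, InjOn f s := fun x hx =>
    let φ := (hf x hx).toOpenPartialHomeomorph f
    ⟨φ.source, φ.open_source.mem_nhds (hf x hx).mem_toOpenPartialHomeomorph_source, φ.injOn⟩
  obtain ⟨W, hW, hWinj⟩ :=
    hinj.exists_mem_nhdsSet hC (fun x hx => (hf x hx).continuousAt) locally_injOn
  refine ⟨Function.invFunOn f W, fun x hx => ?_⟩
  have localInverse_mem : ∀ᶠ y in 𝓝 (f x), (hf x hx).localInverse f (f' x) x y ∈ W :=
    (hf x hx).localInverse_tendsto (mem_nhdsSet_iff_forall.1 hW x hx)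
  filter_upwards [(hf x hx).eventually_right_inverse, localInverse_mem] with y hy hyW
  have y_mem_image : ∃ w ∈ W, f w = y := ⟨_, hyW, hy⟩
  exact hWinj (Function.invFunOn_mem y_mem_image) hyW
    ((Function.invFunOn_eq y_mem_image).trans hy.symm)

theorem exists_contDiffAt_inverse_of_isCompact {𝕜 E F : Type*} [RCLike 𝕜]
    [NormedAddCommGroup E] [NormedSpace 𝕜 E] [CompleteSpace E]
    [NormedAddCommGroup F] [NormedSpace 𝕜 F]
    {f : E → F} {C : Set E} {n : WithTop ℕ∞} (hC : IsCompact C) (hinj : InjOn f C) (hn : n ≠ 0)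
    (hf : ∀ x ∈ C, ContDiffAt 𝕜 n f x)
    (hf' : ∀ x ∈ C, ∃ f' : E ≃L[𝕜] F, HasFDerivAt f (f' : E →L[𝕜] F) x) :
    ∃ g : F → E, ∀ x ∈ C,
      g (f x) = x ∧ ContDiffAt 𝕜 n g (f x) ∧ ∀ᶠ y in 𝓝 (f x), f (g y) = y := by
  rcases C.eq_empty_or_nonempty with rfl | ⟨x₀, hx₀⟩
  · exact ⟨fun _ => 0, fun _ hx => hx.elim⟩
  have : Nonempty (E ≃L[𝕜] F) := (hf' x₀ hx₀).nonempty
  choose! f' hf' using hf'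
  have hstrict : ∀ x ∈ C, HasStrictFDerivAt f (f' x : E →L[𝕜] F) x := fun x hx =>
    (hf x hx).hasStrictFDerivAt' (hf' x hx) hn
  obtain ⟨g, hg⟩ := exists_eventuallyEq_localInverse_of_isCompact hC hinj hstrict
  refine ⟨g, fun x hx => ⟨?_, ?_, ?_⟩⟩
  · exact (hg x hx).self_of_nhds.trans (hstrict x hx).localInverse_apply_image
  · exact ((hf x hx).to_localInverse (hf' x hx) hn).congr_of_eventuallyEq (hg x hx)
  · filter_upwards [hg x hx, (hstrict x hx).eventually_right_inverse] with y hy hright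
    rwa [hy]

end InverseFunction

section ImplicitFunction

variable {𝕜 X Y Z : Type*} [NormedAddCommGroup X] [NormedAddCommGroup Y] [NormedAddCommGroup Z]

theorem exists_equiv_hasFDerivAt_snd_prodMk [NontriviallyNormedField 𝕜]
    [NormedSpace 𝕜 X] [NormedSpace 𝕜 Y] [NormedSpace 𝕜 Z] {P : Y × X → Z} {v : Y} {a : X}
    (hP : DifferentiableAt 𝕜 P (v, a))
    (hiso : ∃ e : Y ≃L[𝕜] Z, HasFDerivAt (fun w : Y => P (w, a)) (e : Y →L[𝕜] Z) v) :
    ∃ Φ' : (Y × X) ≃L[𝕜] X × Z,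
      HasFDerivAt (fun q : Y × X => (q.2, P q)) (Φ' : Y × X →L[𝕜] X × Z) (v, a) := by
  obtain ⟨e, he⟩ := hiso
  set L := fderiv 𝕜 P (v, a)
  have partial_eq : (e : Y →L[𝕜] Z) = L ∘L .inl 𝕜 Y X :=
    he.unique (hP.hasFDerivAt.comp v (hasFDerivAt_prodMk_left v a))
  refine ⟨(ContinuousLinearEquiv.prodComm 𝕜 Y X).trans
    ((ContinuousLinearEquiv.refl 𝕜 X).skewProd e (L ∘L .inr 𝕜 Y X)), ?_⟩
  refine (hasFDerivAt_snd.prodMk hP.hasFDerivAt).congr_fderiv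
    (ContinuousLinearMap.ext fun q => Prod.ext rfl ?_)
  calc L q = L (q.1, 0) + L (0, q.2) := by rw [← map_add, Prod.mk_add_mk, add_zero, zero_add]
    _ = e q.1 + L (0, q.2) :=
        congrArg (· + L (0, q.2)) (DFunLike.congr_fun partial_eq q.1).symm

variable [RCLike 𝕜] [NormedSpace 𝕜 X] [CompleteSpace X] [NormedSpace 𝕜 Y] [CompleteSpace Y]
  [NormedSpace 𝕜 Z] {P : Y × X → Z} {K : Set X} {u : X → Y} {n : WithTop ℕ∞}

theorem exists_contDiffAt_implicitFunction_of_isCompact (hK : IsCompact K)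
    (hu : ContinuousOn u K) (hn : n ≠ 0) (hP : ∀ a ∈ K, ContDiffAt 𝕜 n P (u a, a))
    (hsol : ∀ a ∈ K, P (u a, a) = 0)
    (hiso : ∀ a ∈ K, ∃ e : Y ≃L[𝕜] Z,
      HasFDerivAt (fun v : Y => P (v, a)) (e : Y →L[𝕜] Z) (u a)) :
    ∃ g : X → Y, ∀ a ∈ K,
      g a = u a ∧ ContDiffAt 𝕜 n g a ∧ ∀ᶠ b in 𝓝 a, P (g b, b) = 0 := by
  let Φ : Y × X → X × Z := fun q => (q.2, P q)
  have isCompact_graph : IsCompact ((fun a => (u a, a)) '' K) :=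
    hK.image_of_continuousOn (hu.prodMk continuousOn_id)
  have injOn_graph : InjOn Φ ((fun a => (u a, a)) '' K) := by
    rintro _ ⟨a, -, rfl⟩ _ ⟨b, -, rfl⟩ hab
    obtain rfl : a = b := congrArg Prod.fst hab
    rfl
  obtain ⟨Ψ, hΨ⟩ := exists_contDiffAt_inverse_of_isCompact isCompact_graph injOn_graph hn
    (forall_mem_image.2 fun a ha => contDiffAt_snd.prodMk (hP a ha))
    (forall_mem_image.2 fun a ha =>
      exists_equiv_hasFDerivAt_snd_prodMk ((hP a ha).differentiableAt hn) (hiso a ha))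
  refine ⟨fun b => (Ψ (b, 0)).1, fun a ha => ?_⟩
  obtain ⟨Ψ_apply, Ψ_contDiffAt, Φ_Ψ_eq⟩ := hΨ _ (mem_image_of_mem _ ha)
  have Φ_apply : Φ (u a, a) = (a, 0) := Prod.ext rfl (hsol a ha)
  rw [Φ_apply] at Ψ_apply Ψ_contDiffAt Φ_Ψ_eq
  refine ⟨congrArg Prod.fst Ψ_apply, ?_, ?_⟩
  · exact contDiffAt_fst.comp a (Ψ_contDiffAt.comp a (contDiffAt_id.prodMk contDiffAt_const))
  · have continuous_slice : Continuous fun b : X => (b, (0 : Z)) := by fun_prop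
    filter_upwards [(continuous_slice.tendsto a).eventually Φ_Ψ_eq] with b hb
    have Ψ_snd : (Ψ (b, 0)).2 = b := congrArg Prod.fst hb
    calc P ((Ψ (b, 0)).1, b) = P (Ψ (b, 0)) := congrArg P (Prod.ext rfl Ψ_snd.symm)
      _ = 0 := congrArg Prod.snd hb

-- Near `a ∈ K`, uniqueness identifies `u` on `K` with the implicit function through `(u a, a)`.
theorem continuousOn_of_forall_unique_zero (hn : n ≠ 0)
    (hP : ∀ a ∈ K, ContDiffAt 𝕜 n P (u a, a))
    (hsol : ∀ a ∈ K, P (u a, a) = 0) (huniq : ∀ a ∈ K, ∀ v : Y, P (v, a) = 0 → v = u a)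
    (hiso : ∀ a ∈ K, ∃ e : Y ≃L[𝕜] Z,
      HasFDerivAt (fun v : Y => P (v, a)) (e : Y →L[𝕜] Z) (u a)) :
    ContinuousOn u K := by
  intro a ha
  have singleton_subset : ∀ b ∈ ({a} : Set X), b ∈ K := singleton_subset_iff.2 ha
  obtain ⟨g, hg⟩ := exists_contDiffAt_implicitFunction_of_isCompact isCompact_singleton
    (continuousOn_singleton u a) hn (fun b hb => hP b (singleton_subset b hb))
    (fun b hb => hsol b (singleton_subset b hb)) (fun b hb => hiso b (singleton_subset b hb))
  obtain ⟨g_apply, g_contDiffAt, g_solves⟩ := hg a rfl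
  refine g_contDiffAt.continuousAt.continuousWithinAt.congr_of_eventuallyEq ?_ g_apply.symm
  filter_upwards [nhdsWithin_le_nhds g_solves, self_mem_nhdsWithin] with b hb hbK
  exact (huniq b hbK _ hb).symm

end ImplicitFunction

theorem holomorphic_solution_map_extension_general
    {X Y Z : Type*} [NormedAddCommGroup X] [NormedSpace ℂ X] [CompleteSpace X]
    [NormedAddCommGroup Y] [NormedSpace ℂ Y] [CompleteSpace Y]
    [NormedAddCommGroup Z] [NormedSpace ℂ Z]
    {P : Y × X → Z} {U : Set (Y × X)} (hU : IsOpen U) (hP : DifferentiableOn ℂ P U)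
    {K : Set X} (hK : IsCompact K) {u : X → Y} (hu : ContinuousOn u K)
    (hmem : ∀ a ∈ K, (u a, a) ∈ U) (hsol : ∀ a ∈ K, P (u a, a) = 0)
    (hiso : ∀ a ∈ K, ∃ e : Y ≃L[ℂ] Z,
      HasFDerivAt (fun v : Y => P (v, a)) (e : Y →L[ℂ] Z) (u a)) :
    ∃ (O : Set X) (B : ℝ) (g : X → Y), IsOpen O ∧ K ⊆ O ∧
      DifferentiableOn ℂ g O ∧ (∀ a ∈ K, g a = u a) ∧
      (∀ b ∈ O, (g b, b) ∈ U ∧ P (g b, b) = 0) ∧ (∀ b ∈ O, ‖g b‖ ≤ B) := by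
  have P_contDiffAt : ∀ a ∈ K, ContDiffAt ℂ 1 P (u a, a) := fun a ha =>
    contDiffAt_one_of_eventually_differentiableAt
      (hP.eventually_differentiableAt (hU.mem_nhds (hmem a ha)))
  obtain ⟨g, hg⟩ := exists_contDiffAt_implicitFunction_of_isCompact hK hu one_ne_zero
    P_contDiffAt hsol hiso
  obtain ⟨B, hB⟩ := (hK.image_of_continuousOn hu).isBounded.exists_norm_le
  have near_K : ∀ᶠ b in 𝓝ˢ K,
      DifferentiableAt ℂ g b ∧ (g b, b) ∈ U ∧ P (g b, b) = 0 ∧ ‖g b‖ ≤ B + 1 := by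
    refine eventually_nhdsSet_iff_forall.2 fun a ha => ?_
    obtain ⟨g_apply, g_contDiffAt, g_solves⟩ := hg a ha
    have g_continuousAt : ContinuousAt g a := g_contDiffAt.continuousAt
    have graph_mem : ∀ᶠ b in 𝓝 a, (g b, b) ∈ U :=
      (g_continuousAt.prodMk continuousAt_id).eventually_mem
        (hU.mem_nhds (by simpa only [g_apply, id] using hmem a ha))
    have norm_lt : ∀ᶠ b in 𝓝 a, ‖g b‖ < B + 1 :=
      g_continuousAt.norm.eventually_lt_const
        (by simpa only [g_apply] using (hB _ (mem_image_of_mem u ha)).trans_lt (lt_add_one B))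
    filter_upwards [g_contDiffAt.eventually (by simp), graph_mem, g_solves, norm_lt]
      with b hdiff hbU hb hlt
    exact ⟨hdiff.differentiableAt one_ne_zero, hbU, hb, hlt.le⟩
  obtain ⟨O, hO, hKO, hgood⟩ := eventually_nhdsSet_iff_exists.1 near_K
  exact ⟨O, B + 1, g, hO, hKO, fun b hb => (hgood b hb).1.differentiableWithinAt,
    fun a ha => (hg a ha).1, fun b hb => ⟨(hgood b hb).2.1, (hgood b hb).2.2.1⟩,
    fun b hb => (hgood b hb).2.2.2⟩

/-- **Cohen-DeVore, Theorem 4.1** (holomorphic implicit function theorem on compact sets).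
Let `X, Y, Z` be complex Banach spaces, `P : Y × X → Z` holomorphic on all of `Y × X`, and
`K ⊆ X` compact.  Assume: (ii) for each `a ∈ K` there is a unique solution `u a ∈ Y` of
`P(u a, a) = 0`; (iii) for each `a ∈ K` the partial Fréchet derivative `∂_u P(u a, a)` is an
isomorphism from `Y` onto `Z`.  Then there exist an open set `O ⊇ K`, a bound `B`, and a map
`g : O → Y`, holomorphic on `O`, agreeing with `u` on `K`, solving `P(g b, b) = 0` on `O`,
and uniformly bounded by `B` on `O`. -/
theorem holomorphic_solution_map_extension
    {X Y Z : Type*} [NormedAddCommGroup X] [NormedSpace ℂ X] [CompleteSpace X]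
    [NormedAddCommGroup Y] [NormedSpace ℂ Y] [CompleteSpace Y]
    [NormedAddCommGroup Z] [NormedSpace ℂ Z] [CompleteSpace Z]
    (P : Y × X → Z) (hP : Differentiable ℂ P)
    (K : Set X) (hK : IsCompact K)
    (u : X → Y)
    (hsol : ∀ a ∈ K, P (u a, a) = 0)
    (huniq : ∀ a ∈ K, ∀ v : Y, P (v, a) = 0 → v = u a)
    (hiso : ∀ a ∈ K, ∃ e : Y ≃L[ℂ] Z,
      HasFDerivAt (fun v : Y => P (v, a)) (e : Y →L[ℂ] Z) (u a)) :
    ∃ (O : Set X) (B : ℝ) (g : X → Y), IsOpen O ∧ K ⊆ O ∧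
      DifferentiableOn ℂ g O ∧ (∀ a ∈ K, g a = u a) ∧
      (∀ b ∈ O, P (g b, b) = 0) ∧ (∀ b ∈ O, ‖g b‖ ≤ B) := by
  have hu : ContinuousOn u K := continuousOn_of_forall_unique_zero one_ne_zero
    (fun _ _ => contDiffAt_one_of_eventually_differentiableAt (.of_forall hP)) hsol huniq hiso
  obtain ⟨O, B, g, hO, hKO, hg, hgu, hgP, hgB⟩ := holomorphic_solution_map_extension_general
    isOpen_univ hP.differentiableOn hK hu (fun _ _ => mem_univ _) hsol hiso
  exact ⟨O, B, g, hO, hKO, hg, hgu, fun b hb => (hgP b hb).2, hgB⟩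
end

section
/- Let F be a countable index set, let 0 < p < 1, set t := 1/p − 1, and let (a_ν)_{ν∈F} be a family of nonnegative real numbers tending to 0 along any enumeration (so that for each n a set Λ_n ⊆ F of indices of n largest values a_ν exists). Then (a_ν)_{ν∈F} ∈ ℓ_p(F) (i.e., Σ_{ν∈F} a_ν^p < ∞) if and only if Σ_{n≥1} (n^t Σ_{ν∉Λ_n} a_ν)^p n^{−1} < ∞, where for each n ≥ 1, Λ_n ⊆ F is a set of cardinality n containing indices of the n largest values a_ν. -/
open ENNReal

/-!
Let `b k := ⨆ ν ∉ Λ k, a ν` be the decreasing rearrangement of `a`. Passing from `Λ k` to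
`Λ (k + 1)` exchanges some indices of value `b k` for others of the same value and adds one more, so
`∑_{ν ∉ Λ n} a ν = ∑_{k ≥ n} b k` and `∑_ν a ν ^ p = ∑_k b k ^ p` although the `Λ n` need not be
nested. Since `p * t = 1 - p`, the claim becomes that `∑_k b k ^ p < ∞` if and only if
`∑_{n ≥ 1} ((∑_{k ≥ n} b k) / n) ^ p < ∞`, for antitone `b`.

The average on the right is at least `b (2 * n)`, which gives one direction. For the other, cutting
the tail at the points `2 ^ j * n` bounds the average by `∑_j 2 ^ j * b (2 ^ j * n)`. Take the
`p`-th power term by term and sum over `n` first: as `b` is antitone, the `j`-th term contributes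
at most `2 ^ (j * p) * 2 ^ (-j) * ∑_k b k ^ p`, and these form a convergent geometric series because
`p < 1`.
-/

section AntitoneSequences

lemma rpow_tsum_le_tsum_rpow {ι : Type*} {p : ℝ} (hp0 : 0 < p) (hp1 : p ≤ 1) (x : ι → ℝ≥0∞) :
    (∑' i, x i) ^ p ≤ ∑' i, x i ^ p := by
  have rpow_sum_le (s : Finset ι) : (∑ i ∈ s, x i) ^ p ≤ ∑ i ∈ s, x i ^ p :=
    s.le_sum_of_subadditive (· ^ p) (ENNReal.zero_rpow_of_pos hp0).le
      (fun y z => ENNReal.rpow_add_le_add_rpow y z hp0.le hp1) x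
  rw [← ENNReal.le_rpow_inv_iff hp0, ENNReal.tsum_eq_iSup_sum]
  refine iSup_le fun s => ?_
  rw [ENNReal.le_rpow_inv_iff hp0]
  exact (rpow_sum_le s).trans (ENNReal.sum_le_tsum s)

lemma tsum_eq_tsum_sum_fin (f : ℕ → ℝ≥0∞) (d : ℕ) [NeZero d] :
    ∑' k, f k = ∑' n, ∑ i : Fin d, f (n * d + i) := by
  rw [← (Nat.divModEquiv d).symm.tsum_eq f, ENNReal.tsum_prod']
  simp only [tsum_fintype, Nat.divModEquiv_symm_apply]

variable {b : ℕ → ℝ≥0∞}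

lemma mul_tsum_mul_succ_le_tsum (hb : Antitone b) (d : ℕ) [NeZero d] :
    d * ∑' n : ℕ, b (d * (n + 1)) ≤ ∑' k, b k := by
  rw [tsum_eq_tsum_sum_fin b d, ← ENNReal.tsum_mul_left]
  refine ENNReal.tsum_le_tsum fun n => ?_
  calc d * b (d * (n + 1)) = ∑ _i : Fin d, b (d * (n + 1)) := by simp
    _ ≤ ∑ i : Fin d, b (n * d + i) := by
      refine Finset.sum_le_sum fun i _ => hb ?_
      linarith [i.isLt]

lemma tsum_le_mul_tsum_mul (hb : Antitone b) (d : ℕ) [NeZero d] :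
    ∑' k, b k ≤ d * ∑' n : ℕ, b (d * n) := by
  rw [tsum_eq_tsum_sum_fin b d, ← ENNReal.tsum_mul_left]
  refine ENNReal.tsum_le_tsum fun n => ?_
  calc ∑ i : Fin d, b (n * d + i) ≤ ∑ _i : Fin d, b (d * n) :=
        Finset.sum_le_sum fun i _ => hb (by linarith)
    _ = d * b (d * n) := by simp

lemma tsum_nat_add_le_tsum_dyadic (hb : Antitone b) {n : ℕ} (hn : 0 < n) :
    ∑' k, b (k + n) ≤ ∑' j : ℕ, (2 ^ j * n) * b (2 ^ j * n) := by
  have cut_strictMono : StrictMono fun j : ℕ => 2 ^ j * n := fun i j hij =>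
    Nat.mul_lt_mul_of_pos_right (Nat.pow_lt_pow_right one_lt_two hij) hn
  rw [ENNReal.tsum_eq_iSup_nat'
    ((Filter.tendsto_sub_atTop_nat n).comp cut_strictMono.tendsto_atTop)]
  refine iSup_le fun m => ?_
  calc ∑ k ∈ Finset.range (2 ^ m * n - n), b (k + n)
      = ∑ k ∈ Finset.Ico (2 ^ 0 * n) (2 ^ m * n), b k := by
        simp only [Finset.sum_Ico_eq_sum_range, pow_zero, one_mul, add_comm n]
    _ ≤ ∑ j ∈ Finset.range m, (2 ^ (j + 1) * n - 2 ^ j * n) • b (2 ^ j * n) :=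
        Finset.le_sum_schlomilch' (fun _ _ _ h => hb h) (fun j => by positivity)
          cut_strictMono.monotone m
    _ = ∑ j ∈ Finset.range m, (2 ^ j * n) * b (2 ^ j * n) := by
        refine Finset.sum_congr rfl fun j _ => ?_
        rw [pow_succ, mul_two, add_mul, Nat.add_sub_cancel, nsmul_eq_mul]
        push_cast
        rfl
    _ ≤ ∑' j : ℕ, (2 ^ j * n) * b (2 ^ j * n) := ENNReal.sum_le_tsum _

lemma le_tsum_nat_add_div (hb : Antitone b) {n : ℕ} (hn : n ≠ 0) :
    b (2 * n) ≤ (∑' k, b (k + n)) / n := by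
  rw [ENNReal.le_div_iff_mul_le (by simp [hn]) (by simp)]
  calc b (2 * n) * n = ∑ _k ∈ Finset.range n, b (2 * n) := by simp [mul_comm]
    _ ≤ ∑ k ∈ Finset.range n, b (k + n) :=
        Finset.sum_le_sum fun k hk => hb (by linarith [Finset.mem_range.1 hk])
    _ ≤ ∑' k, b (k + n) := ENNReal.sum_le_tsum _

lemma rpow_tsum_nat_add_div_le {p : ℝ} (hp0 : 0 < p) (hp1 : p ≤ 1) (hb : Antitone b) {n : ℕ}
    (hn : 0 < n) :
    ((∑' k, b (k + n)) / n) ^ p ≤ ∑' j : ℕ, (2 ^ j) ^ p * b (2 ^ j * n) ^ p := by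
  have average_le : (∑' k, b (k + n)) / n ≤ ∑' j : ℕ, 2 ^ j * b (2 ^ j * n) := by
    refine ENNReal.div_le_of_le_mul ((tsum_nat_add_le_tsum_dyadic hb hn).trans_eq ?_)
    rw [← ENNReal.tsum_mul_right]
    exact tsum_congr fun j => mul_right_comm _ _ _
  calc ((∑' k, b (k + n)) / n) ^ p
      ≤ (∑' j : ℕ, 2 ^ j * b (2 ^ j * n)) ^ p := ENNReal.rpow_le_rpow average_le hp0.le
    _ ≤ ∑' j : ℕ, (2 ^ j * b (2 ^ j * n)) ^ p := rpow_tsum_le_tsum_rpow hp0 hp1 _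
    _ = ∑' j : ℕ, (2 ^ j) ^ p * b (2 ^ j * n) ^ p := by
        simp only [ENNReal.mul_rpow_of_nonneg _ _ hp0.le]

lemma tsum_dyadic_dilation_rpow_le {p : ℝ} (hp0 : 0 ≤ p) (hb : Antitone b) (j : ℕ) :
    ∑' n : ℕ, (2 ^ j) ^ p * b (2 ^ j * (n + 1)) ^ p ≤ (2 ^ (p - 1)) ^ j * ∑' k, b k ^ p := by
  have rpow_antitone : Antitone fun k => b k ^ p :=
    (ENNReal.monotone_rpow_of_nonneg hp0).comp_antitone hb
  have two_pow_rpow : ((2 : ℝ≥0∞) ^ j) ^ p = (2 ^ (p - 1)) ^ j * (2 ^ j : ℕ) := by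
    have two_rpow : (2 : ℝ≥0∞) ^ p = 2 ^ (p - 1) * 2 := by
      simpa using ENNReal.rpow_add (p - 1) 1 two_ne_zero ofNat_ne_top
    rw [← ENNReal.rpow_natCast_mul, mul_comm, ENNReal.rpow_mul_natCast, two_rpow, mul_pow,
      Nat.cast_pow, Nat.cast_ofNat]
  rw [ENNReal.tsum_mul_left, two_pow_rpow, mul_assoc]
  gcongr
  exact mul_tsum_mul_succ_le_tsum rpow_antitone (2 ^ j)

theorem tsum_rpow_tsum_nat_add_div_le {p : ℝ} (hp0 : 0 < p) (hp1 : p ≤ 1) (hb : Antitone b) :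
    ∑' n : ℕ, ((∑' k, b (k + (n + 1))) / (n + 1 : ℕ)) ^ p ≤
      (1 - 2 ^ (p - 1))⁻¹ * ∑' k, b k ^ p := by
  calc ∑' n : ℕ, ((∑' k, b (k + (n + 1))) / (n + 1 : ℕ)) ^ p
      ≤ ∑' n : ℕ, ∑' j : ℕ, (2 ^ j) ^ p * b (2 ^ j * (n + 1)) ^ p :=
        ENNReal.tsum_le_tsum fun n => rpow_tsum_nat_add_div_le hp0 hp1 hb n.succ_pos
    _ = ∑' j : ℕ, ∑' n : ℕ, (2 ^ j) ^ p * b (2 ^ j * (n + 1)) ^ p := ENNReal.tsum_comm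
    _ ≤ ∑' j : ℕ, (2 ^ (p - 1)) ^ j * ∑' k, b k ^ p :=
        ENNReal.tsum_le_tsum fun j => tsum_dyadic_dilation_rpow_le hp0.le hb j
    _ = (1 - 2 ^ (p - 1))⁻¹ * ∑' k, b k ^ p := by
        rw [ENNReal.tsum_mul_right, ENNReal.tsum_geometric]

theorem tsum_rpow_le_tsum_rpow_tsum_nat_add_div {p : ℝ} (hp0 : 0 ≤ p) (hb : Antitone b) :
    ∑' k, b k ^ p ≤
      2 * (b 0 ^ p + ∑' n : ℕ, ((∑' k, b (k + (n + 1))) / (n + 1 : ℕ)) ^ p) := by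
  have rpow_antitone : Antitone fun k => b k ^ p :=
    (ENNReal.monotone_rpow_of_nonneg hp0).comp_antitone hb
  calc ∑' k, b k ^ p ≤ (2 : ℕ) * ∑' n, b (2 * n) ^ p := tsum_le_mul_tsum_mul rpow_antitone 2
    _ = 2 * (b 0 ^ p + ∑' n, b (2 * (n + 1)) ^ p) := by
        rw [tsum_eq_zero_add' ENNReal.summable, Nat.cast_ofNat]
    _ ≤ _ := by
        gcongr with n
        exact le_tsum_nat_add_div hb n.succ_ne_zero

theorem tsum_rpow_ne_top_iff_of_antitone {p : ℝ} (hp0 : 0 < p) (hp1 : p < 1) (hb : Antitone b)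
    (hb0 : b 0 ≠ ∞) :
    ∑' k, b k ^ p ≠ ∞ ↔
      ∑' n : ℕ, ((∑' k, b (k + (n + 1))) / (n + 1 : ℕ)) ^ p ≠ ∞ := by
  have geometric_ne_top : (1 - (2 : ℝ≥0∞) ^ (p - 1))⁻¹ ≠ ∞ := by
    rw [ENNReal.inv_ne_top]
    exact (tsub_pos_of_lt
      (ENNReal.rpow_lt_one_of_one_lt_of_neg one_lt_two (sub_neg.2 hp1))).ne'
  constructor <;> intro h
  · exact ne_top_of_le_ne_top (ENNReal.mul_ne_top geometric_ne_top h)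
      (tsum_rpow_tsum_nat_add_div_le hp0 hp1.le hb)
  · exact ne_top_of_le_ne_top
      (ENNReal.mul_ne_top ofNat_ne_top
        (ENNReal.add_ne_top.2 ⟨ENNReal.rpow_ne_top_of_nonneg hp0.le hb0, h⟩))
      (tsum_rpow_le_tsum_rpow_tsum_nat_add_div hp0.le hb)

end AntitoneSequences

/-- `Λ n` consists of `n` indices of largest values of `a`, for every `n`. Ties may be broken
differently for different `n`, so the sets `Λ n` are not required to be nested. -/
structure IsLargestSelection {F α : Type*} [LE α] (a : F → α) (Λ : ℕ → Finset F) : Prop where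
  card_eq (n : ℕ) : (Λ n).card = n
  le_of_mem_of_notMem (n : ℕ) : ∀ ν ∈ Λ n, ∀ μ ∉ Λ n, a μ ≤ a ν

/-- The decreasing rearrangement of `a` along `Λ`, numbered from `0`: the largest value of `a` that
remains when the `k` indices in `Λ k` are removed. -/
def rearrangement {F α : Type*} [CompleteLattice α] (a : F → α) (Λ : ℕ → Finset F) (k : ℕ) : α :=
  ⨆ ν ∉ Λ k, a ν

section Rearrangement

variable {F α : Type*} [CompleteLattice α] {a : F → α} {Λ : ℕ → Finset F}

lemma le_rearrangement_of_notMem {k : ℕ} {ν : F} (hν : ν ∉ Λ k) : a ν ≤ rearrangement a Λ k :=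
  le_iSup₂_of_le ν hν le_rfl

namespace IsLargestSelection

lemma rearrangement_le_of_mem (h : IsLargestSelection a Λ) {k : ℕ} {ν : F} (hν : ν ∈ Λ k) :
    rearrangement a Λ k ≤ a ν :=
  iSup₂_le fun μ hμ => h.le_of_mem_of_notMem k ν hν μ hμ

lemma exists_mem_notMem (h : IsLargestSelection a Λ) {m n : ℕ} (hmn : m < n) :
    ∃ ν ∈ Λ n, ν ∉ Λ m :=
  Finset.exists_mem_notMem_of_card_lt_card (by rwa [h.card_eq, h.card_eq])

lemma antitone_rearrangement (h : IsLargestSelection a Λ) : Antitone (rearrangement a Λ) :=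
  antitone_nat_of_succ_le fun k => by
    obtain ⟨ν, hν, hν'⟩ := h.exists_mem_notMem k.lt_succ_self
    exact (h.rearrangement_le_of_mem hν).trans (le_rearrangement_of_notMem hν')

lemma card_sdiff_succ [DecidableEq F] (h : IsLargestSelection a Λ) (k : ℕ) :
    (Λ (k + 1) \ Λ k).card = (Λ k \ Λ (k + 1)).card + 1 := by
  have card_succ := Finset.card_sdiff_add_card_inter (Λ (k + 1)) (Λ k)
  have card_self := Finset.card_sdiff_add_card_inter (Λ k) (Λ (k + 1))
  rw [h.card_eq] at card_succ
  rw [h.card_eq, Finset.inter_comm] at card_self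
  omega

lemma rearrangement_le_of_mem_succ (h : IsLargestSelection a Λ) {k : ℕ} {ν : F}
    (hν : ν ∈ Λ (k + 1)) : rearrangement a Λ k ≤ a ν := by
  classical
  by_cases hνk : ν ∈ Λ k
  · exact h.rearrangement_le_of_mem hνk
  refine iSup₂_le fun μ hμk => ?_
  by_cases hμ : μ ∈ Λ (k + 1)
  swap
  · exact h.le_of_mem_of_notMem (k + 1) ν hν μ hμ
  obtain rfl | hne := eq_or_ne μ ν
  · rfl
  have one_lt_card : 1 < (Λ (k + 1) \ Λ k).card :=
    Finset.one_lt_card.2 ⟨μ, Finset.mem_sdiff.2 ⟨hμ, hμk⟩, ν, Finset.mem_sdiff.2 ⟨hν, hνk⟩, hne⟩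
  obtain ⟨κ, hκ⟩ : (Λ k \ Λ (k + 1)).Nonempty := by
    rw [← Finset.card_pos]
    have := h.card_sdiff_succ k
    omega
  obtain ⟨hκk, hκ⟩ := Finset.mem_sdiff.1 hκ
  exact (h.le_of_mem_of_notMem k κ hκk μ hμk).trans (h.le_of_mem_of_notMem (k + 1) ν hν κ hκ)

lemma eq_rearrangement_of_mem_succ_of_notMem (h : IsLargestSelection a Λ) {k : ℕ} {ν : F}
    (hν : ν ∈ Λ (k + 1)) (hνk : ν ∉ Λ k) : a ν = rearrangement a Λ k :=
  (le_rearrangement_of_notMem hνk).antisymm (h.rearrangement_le_of_mem_succ hν)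

lemma eq_rearrangement_of_mem_of_notMem_succ (h : IsLargestSelection a Λ) {k : ℕ} {ν : F}
    (hνk : ν ∈ Λ k) (hν : ν ∉ Λ (k + 1)) : a ν = rearrangement a Λ k :=
  ((le_rearrangement_of_notMem hν).trans (h.antitone_rearrangement k.le_succ)).antisymm
    (h.rearrangement_le_of_mem hνk)

theorem sum_eq_sum_range_rearrangement {M : Type*} [AddCommMonoid M] (h : IsLargestSelection a Λ)
    (φ : α → M) (n : ℕ) :
    ∑ ν ∈ Λ n, φ (a ν) = ∑ k ∈ Finset.range n, φ (rearrangement a Λ k) := by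
  classical
  induction n with
  | zero => simp [Finset.card_eq_zero.1 (h.card_eq 0)]
  | succ k ih =>
    have sum_gained : ∑ ν ∈ Λ (k + 1) \ Λ k, φ (a ν) =
        (Λ (k + 1) \ Λ k).card • φ (rearrangement a Λ k) :=
      Finset.sum_eq_card_nsmul fun ν hν => by
        obtain ⟨hν, hνk⟩ := Finset.mem_sdiff.1 hν
        rw [h.eq_rearrangement_of_mem_succ_of_notMem hν hνk]
    have sum_lost : ∑ ν ∈ Λ k \ Λ (k + 1), φ (a ν) =
        (Λ k \ Λ (k + 1)).card • φ (rearrangement a Λ k) :=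
      Finset.sum_eq_card_nsmul fun ν hν => by
        obtain ⟨hνk, hν⟩ := Finset.mem_sdiff.1 hν
        rw [h.eq_rearrangement_of_mem_of_notMem_succ hνk hν]
    rw [Finset.sum_range_succ, ← ih, ← Finset.sum_inter_add_sum_sdiff (Λ (k + 1)) (Λ k),
      ← Finset.sum_inter_add_sum_sdiff (Λ k) (Λ (k + 1)), sum_gained, sum_lost,
      h.card_sdiff_succ, succ_nsmul, Finset.inter_comm, add_assoc]

lemma le_rearrangement_of_frequently_notMem (h : IsLargestSelection a Λ) {ν : F}
    (hν : ∃ᶠ n in Filter.atTop, ν ∉ Λ n) (k : ℕ) : a ν ≤ rearrangement a Λ k := by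
  obtain ⟨n, hkn, hn⟩ := Filter.frequently_atTop.1 hν k
  exact (le_rearrangement_of_notMem hn).trans (h.antitone_rearrangement hkn)

variable {φ : α → ℝ≥0∞}

lemma tsum_rearrangement_eq_top (h : IsLargestSelection a Λ) (hφ : Monotone φ) {ν : F}
    (hφν : φ (a ν) ≠ 0) (hν : ∃ᶠ n in Filter.atTop, ν ∉ Λ n) :
    ∑' k, φ (rearrangement a Λ k) = ∞ :=
  top_le_iff.1 <| calc
    ∞ = ∑' _ : ℕ, φ (a ν) := (ENNReal.tsum_const_eq_top_of_ne_zero hφν).symm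
    _ ≤ ∑' k, φ (rearrangement a Λ k) :=
      ENNReal.tsum_le_tsum fun k => hφ (h.le_rearrangement_of_frequently_notMem hν k)

theorem tsum_eq_tsum_rearrangement (h : IsLargestSelection a Λ) (hφ : Monotone φ) :
    ∑' ν, φ (a ν) = ∑' k, φ (rearrangement a Λ k) := by
  apply le_antisymm
  · by_cases hmem : ∀ ν, φ (a ν) ≠ 0 → ∀ᶠ n in Filter.atTop, ν ∈ Λ n
    swap
    · push Not at hmem
      obtain ⟨ν, hφν, hν⟩ := hmem
      exact le_top.trans_eq (h.tsum_rearrangement_eq_top hφ hφν hν).symm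
    rw [ENNReal.tsum_eq_iSup_sum]
    refine iSup_le fun s => ?_
    obtain ⟨n, hn⟩ : ∃ n, ∀ ν ∈ s, φ (a ν) ≠ 0 → ν ∈ Λ n := by
      refine ((Filter.eventually_all_finset s).2 fun ν _ => ?_).exists (f := Filter.atTop)
      exact Filter.eventually_imp_distrib_left.2 (hmem ν)
    calc ∑ ν ∈ s, φ (a ν) ≤ ∑ ν ∈ Λ n, φ (a ν) := Finset.sum_le_sum_of_ne_zero hn
      _ = ∑ k ∈ Finset.range n, φ (rearrangement a Λ k) := h.sum_eq_sum_range_rearrangement φ n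
      _ ≤ ∑' k, φ (rearrangement a Λ k) := ENNReal.sum_le_tsum _
  · rw [ENNReal.tsum_eq_iSup_nat]
    refine iSup_le fun n => ?_
    rw [← h.sum_eq_sum_range_rearrangement φ n]
    exact ENNReal.sum_le_tsum _

theorem tsum_notMem_eq_tsum_rearrangement (h : IsLargestSelection a Λ) (hφ : Monotone φ) {n : ℕ}
    (hfin : ∀ ν ∈ Λ n, φ (a ν) ≠ ∞) :
    ∑' ν : {ν : F // ν ∉ Λ n}, φ (a ν) = ∑' k, φ (rearrangement a Λ (k + n)) := by
  refine (ENNReal.add_right_inj (ENNReal.sum_ne_top.2 hfin)).1 ?_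
  calc ∑ ν ∈ Λ n, φ (a ν) + ∑' ν : {ν : F // ν ∉ Λ n}, φ (a ν) = ∑' ν, φ (a ν) :=
        ENNReal.sum_add_tsum_compl (Λ n) fun ν => φ (a ν)
    _ = ∑' k, φ (rearrangement a Λ k) := h.tsum_eq_tsum_rearrangement hφ
    _ = ∑ k ∈ Finset.range n, φ (rearrangement a Λ k) + ∑' k, φ (rearrangement a Λ (k + n)) :=
        ENNReal.summable.sum_add_tsum_nat_add'.symm
    _ = ∑ ν ∈ Λ n, φ (a ν) + ∑' k, φ (rearrangement a Λ (k + n)) := by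
        rw [h.sum_eq_sum_range_rearrangement]

lemma rearrangement_zero_ne_top {a : F → ℝ≥0∞} (h : IsLargestSelection a Λ)
    (hfin : ∀ ν, a ν ≠ ∞) : rearrangement a Λ 0 ≠ ∞ := by
  obtain ⟨ν, hν, -⟩ := h.exists_mem_notMem zero_lt_one
  exact ne_top_of_le_ne_top (hfin ν) (h.rearrangement_le_of_mem_succ hν)

end IsLargestSelection

end Rearrangement

lemma rpow_mul_rpow_div_eq_div_rpow {p t : ℝ} (hp0 : 0 < p) (ht : t = 1 / p - 1) {x : ℝ≥0∞}
    (hx0 : x ≠ 0) (hx : x ≠ ∞) (s : ℝ≥0∞) : (x ^ t * s) ^ p / x = (s / x) ^ p := by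
  have htp : t * p = 1 - p := by rw [ht, sub_mul, one_div_mul_cancel hp0.ne', one_mul]
  rw [ENNReal.mul_rpow_of_nonneg _ _ hp0.le, ENNReal.div_rpow_of_nonneg _ _ hp0.le,
    ← ENNReal.rpow_mul, htp, ENNReal.rpow_sub _ _ hx0 hx, ENNReal.rpow_one, mul_comm,
    mul_div_assoc, ENNReal.div_right_comm, ENNReal.div_self hx0 hx, one_div, div_eq_mul_inv]

theorem lp_iff_rest_sum_summable_general {F : Type*} {p t : ℝ} (hp0 : 0 < p) (hp1 : p < 1)
    (ht : t = 1 / p - 1) {a : F → ℝ≥0∞} (ha : ∀ ν, a ν ≠ ∞) {Λ : ℕ → Finset F}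
    (hΛ : IsLargestSelection a Λ) :
    ∑' ν, a ν ^ p ≠ ∞ ↔
      ∑' n : ℕ, ((n + 1 : ℝ≥0∞) ^ t * ∑' ν : {ν : F // ν ∉ Λ (n + 1)}, a ν) ^ p / (n + 1) ≠ ∞ := by
  have tail_eq (n : ℕ) : ∑' ν : {ν : F // ν ∉ Λ (n + 1)}, a ν =
      ∑' k, rearrangement a Λ (k + (n + 1)) :=
    hΛ.tsum_notMem_eq_tsum_rearrangement monotone_id fun ν _ => ha ν
  have weighted_term_eq (n : ℕ) (s : ℝ≥0∞) :
      ((n + 1 : ℝ≥0∞) ^ t * s) ^ p / (n + 1) = (s / (n + 1 : ℕ)) ^ p := by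
    rw [rpow_mul_rpow_div_eq_div_rpow hp0 ht (by simp) (by simp), Nat.cast_succ]
  rw [hΛ.tsum_eq_tsum_rearrangement (ENNReal.monotone_rpow_of_nonneg hp0.le)]
  simp only [tail_eq, weighted_term_eq]
  exact tsum_rpow_ne_top_iff_of_antitone hp0 hp1 hΛ.antitone_rearrangement
    (hΛ.rearrangement_zero_ne_top ha)

/-- **Best `n`-term approximation / Stechkin-type characterization.**  Let `F` be a countable
index set, `0 < p < 1`, `t := 1/p - 1`, and let `(a_ν)_{ν ∈ F}` be nonnegative reals tending
to `0` (along the cofinite filter), with `Λ_n ⊆ F` a set of `n` indices of largest values.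
Then `(a_ν) ∈ ℓ_p(F)`, i.e. `Σ_ν a_ν^p < ∞`, if and only if
`Σ_{n ≥ 1} (n^t Σ_{ν ∉ Λ_n} a_ν)^p n^{-1} < ∞`.  (Sums of nonnegative terms are taken in
`ℝ≥0∞` so that "`< ∞`" is meaningful; the sum over `n ≥ 1` is indexed by `n + 1`, `n ∈ ℕ`.) -/
theorem lp_iff_rest_sum_summable
    {F : Type*} [Countable F] (p t : ℝ) (hp0 : 0 < p) (hp1 : p < 1)
    (ht : t = 1 / p - 1)
    (a : F → ℝ) (ha : ∀ ν, 0 ≤ a ν)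
    (ha0 : Filter.Tendsto a Filter.cofinite (nhds 0))
    (Λ : ℕ → Finset F) (hcard : ∀ n, (Λ n).card = n)
    (hmax : ∀ n, ∀ ν ∈ Λ n, ∀ μ ∉ Λ n, a μ ≤ a ν) :
    (∑' ν : F, ENNReal.ofReal (a ν ^ p)) ≠ ∞ ↔
      (∑' n : ℕ, ((n + 1 : ℝ≥0∞) ^ t *
        ∑' ν : {ν : F // ν ∉ Λ (n + 1)}, ENNReal.ofReal (a ν.1)) ^ p / (n + 1 : ℝ≥0∞)) ≠ ∞ := by
  simpa only [ENNReal.ofReal_rpow_of_nonneg (ha _) hp0.le] using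
    lp_iff_rest_sum_summable_general hp0 hp1 ht (fun _ => ENNReal.ofReal_ne_top)
      ⟨hcard, fun n ν hν μ hμ => ENNReal.ofReal_le_ofReal (hmax n ν hν μ hμ)⟩
end
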